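/- arXiv:2207.10272 — 2 statements merged into one kernel-verified Lean document; each statement's English description precedes it below -/
import Mathlib

section
/- Let γ ∈ ℝ and let b : [−1,1] → [0,∞) be measurable. For all nonnegative measurable functions f, g, h on ℝ³ the following two Cauchy–Schwarz estimates hold (as inequalities in [0,∞]): (∫_{ℝ³}∫_{ℝ³}∫_{S²} b(cos θ) |v−v*|^γ f(v*) g(v) h(v') dσ dv* dv)² ≤ (∫_{S²} b(cos θ) sin^{−(3+γ)/2}(θ/2) dσ)² · (∫_{ℝ³}∫_{ℝ³} |v−v*|^γ f(v*)² g(v) dv dv*) · (∫_{ℝ³}∫_{ℝ³} |v−v'|^γ g(v) h(v')² dv dv'), and (∫_{ℝ³}∫_{ℝ³}∫_{S²} b(cos θ) |v−v*|^γ f(v*) g(v) h(v') dσ dv* dv)² ≤ (∫_{S²} b(cos θ) cos^{−(3+γ)/2}(θ/2) dσ)² · (∫_{ℝ³}∫_{ℝ³} |v−v*|^γ f(v*) g(v)² dv dv*) · (∫_{ℝ³}∫_{ℝ³} |v*−v'|^γ f(v*) h(v')² dv* dv'). -/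
/-!
Put `s = sin (θ/2)` and `a = (3+γ)/2`. Writing the integrand as
`(b s^{-a} |v-v*|^γ g(v))^{1/2} f(v*) · (b s^a |v-v*|^γ g(v))^{1/2} h(v')`, Cauchy–Schwarz on
`ℝ³ × ℝ³ × 𝕊²` bounds the square of the trilinear integral by a product of two quadratic integrals.

* In the first, the angular integral splits off by rotation invariance (`lintegral_first`) and
  gives the constant `A = ∫ b s^{-a} dσ`.
* In the second (`lintegral_second`), the variable `v*` has to be exchanged for `v'`. With
  `z = v - v*` one has `v' - v = (|z|σ - z)/2`, of norm `|z| s`. The change of variables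
  (`lintegral_dev`) avoids Jacobians: the weight is invariant under rotating `z` and `σ` together,
  so `h(v + ·)²` may be averaged over the orthogonal group with Haar measure. The average is
  radial, hence a function of `|z| s`; rotating `σ` alone decouples `s` from `z`, and the dilation
  `z ↦ s z` yields a factor `s^{-3-γ}`. Since `a - (3+γ) = -a`, the constant is again `A`.

The second estimate is the first one with the roles of `v` and `v*` (and of `f` and `g`) exchanged,
and `b` replaced by `t ↦ b (-t)`.
-/

open MeasureTheory Real
open scoped ENNReal RealInnerProductSpace Classical

noncomputable section

/-- velocity space ℝ³ -/
abbrev E3 : Type := EuclideanSpace ℝ (Fin 3)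

/-- the unit sphere 𝕊² ⊆ ℝ³ -/
abbrev S2 : Type := Metric.sphere (0 : E3) 1

/-- surface measure on the unit sphere -/
noncomputable instance : MeasureSpace S2 := ⟨(volume : Measure E3).toSphere⟩

/-- Japanese bracket ⟨v⟩ = √(1+|v|²). -/
def jap (v : E3) : ℝ := Real.sqrt (1 + ‖v‖ ^ 2)

/-- Post-collision velocity v' = (v+v*)/2 + (|v-v*|/2)σ. -/
def vP (v w : E3) (σ : S2) : E3 := (2⁻¹ : ℝ) • (v + w) + (‖v - w‖ / 2) • (σ : E3)

/-- Post-collision velocity v*' = (v+v*)/2 - (|v-v*|/2)σ. -/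
def vsP (v w : E3) (σ : S2) : E3 := (2⁻¹ : ℝ) • (v + w) - (‖v - w‖ / 2) • (σ : E3)

/-- cos θ = ((v-v*)/|v-v*|)·σ. -/
def cosTheta (v w : E3) (σ : S2) : ℝ := ⟪v - w, (σ : E3)⟫ / ‖v - w‖

/-- sin(θ/2) = √((1-cos θ)/2). -/
def sinHalf (v w : E3) (σ : S2) : ℝ := Real.sqrt ((1 - cosTheta v w σ) / 2)

/-- cos(θ/2) = √((1+cos θ)/2). -/
def cosHalf (v w : E3) (σ : S2) : ℝ := Real.sqrt ((1 + cosTheta v w σ) / 2)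

/-- a fixed reference unit direction, used to express rotation-invariant angular integrals -/
def e1 : E3 := EuclideanSpace.single 0 1

/-- cos θ for the deviation angle of σ relative to the fixed direction `e1` -/
def cos1 (σ : S2) : ℝ := ⟪e1, (σ : E3)⟫

def sinHalf1 (σ : S2) : ℝ := Real.sqrt ((1 - cos1 σ) / 2)

def cosHalf1 (σ : S2) : ℝ := Real.sqrt ((1 + cos1 σ) / 2)

/-- the standard Maxwellian μ(v) = (2π)^{-3/2} e^{-|v|²/2} -/
def maxw (v : E3) : ℝ := (2 * π) ^ (-(3 : ℝ) / 2) * Real.exp (-‖v‖ ^ 2 / 2)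

/-- Grad's angular cutoff assumption (A2): `bf` is measurable, nonnegative,
`K ≤ bf ≤ K⁻¹` on `[0,1]` for some `K > 0`, and `bf` vanishes on negatives. -/
def gradCutoff (bf : ℝ → ℝ) : Prop :=
  Measurable bf ∧ (∀ t, 0 ≤ bf t) ∧
    (∃ K : ℝ, 0 < K ∧ ∀ t ∈ Set.Icc (0 : ℝ) 1, K ≤ bf t ∧ bf t ≤ K⁻¹) ∧
    ∀ t : ℝ, t < 0 → bf t = 0

/-- gain operator Q⁺ -/
def Qgain (γ : ℝ) (bf : ℝ → ℝ) (f g : E3 → ℝ) (v : E3) : ℝ :=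
  ∫ w : E3, ∫ σ : S2, ‖v - w‖ ^ γ * bf (cosTheta v w σ) * (f (vsP v w σ) * g (vP v w σ))

/-- loss operator Q⁻ -/
def Qloss (γ : ℝ) (bf : ℝ → ℝ) (f g : E3 → ℝ) (v : E3) : ℝ :=
  ∫ w : E3, ∫ σ : S2, ‖v - w‖ ^ γ * bf (cosTheta v w σ) * (f w * g v)

/-- the Boltzmann collision operator Q = Q⁺ - Q⁻ -/
def Qcol (γ : ℝ) (bf : ℝ → ℝ) (f g : E3 → ℝ) (v : E3) : ℝ :=
  ∫ w : E3, ∫ σ : S2, ‖v - w‖ ^ γ * bf (cosTheta v w σ) *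
    (f (vsP v w σ) * g (vP v w σ) - f w * g v)

/-- collision frequency ν(v) -/
def nuF (γ : ℝ) (bf : ℝ → ℝ) (v : E3) : ℝ :=
  ∫ w : E3, ∫ σ : S2, ‖v - w‖ ^ γ * bf (cosTheta v w σ) * maxw w

/-- squared weighted norm ‖f‖²_{L²_q} -/
def wSqR (q : ℝ) (f : E3 → ℝ) : ℝ := ∫ v : E3, f v ^ 2 * jap v ^ (2 * q)

/-- weighted norm ‖f‖_{L²_q} -/
def wNorm (q : ℝ) (f : E3 → ℝ) : ℝ := Real.sqrt (wSqR q f)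

/-- squared star norm ‖f‖²_{L²_{k+γ/2,*}} = ∫∫ μ(v*)|v-v*|^γ f(v)² ⟨v⟩^{2k} -/
def starSq (γ k : ℝ) (f : E3 → ℝ) : ℝ :=
  ∫ v : E3, ∫ w : E3, maxw w * ‖v - w‖ ^ γ * f v ^ 2 * jap v ^ (2 * k)

/-- star norm ‖f‖_{L²_{k+γ/2,*}} -/
def starNorm (γ k : ℝ) (f : E3 → ℝ) : ℝ := Real.sqrt (starSq γ k f)

/-- squared exponentially weighted norm ‖f‖²_{L²_{q,a,b}} -/
def expSq (q a b : ℝ) (f : E3 → ℝ) : ℝ :=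
  ∫ v : E3, f v ^ 2 * jap v ^ (2 * q) * Real.exp (2 * a * jap v ^ b)

/-- exponentially weighted norm ‖f‖_{L²_{q,a,b}} -/
def expNorm (q a b : ℝ) (f : E3 → ℝ) : ℝ := Real.sqrt (expSq q a b f)

/-! ### Rotations and the surface measure -/

lemma exists_reflect {x y : E3} (h : ‖x‖ = ‖y‖) : ∃ S : E3 ≃ₗᵢ[ℝ] E3, S x = y :=
  ⟨(ℝ ∙ (x - y))ᗮ.reflection, Submodule.reflection_sub h⟩

/-- The orthogonal group of `E3`, realised inside the continuous endomorphisms so that it carries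
Mathlib's topological group structure. -/
abbrev O3 : Type := unitary (E3 →L[ℝ] E3)

/-- The star on endomorphisms is the adjoint, which is an isometry. -/
instance : ContinuousStar (E3 →L[ℝ] E3) :=
  ⟨(ContinuousLinearMap.adjoint (𝕜 := ℝ) (E := E3) (F := E3)).continuous⟩

lemma compactSpace_O3 : CompactSpace O3 := by
  refine isCompact_iff_compactSpace.1
    (Metric.isCompact_of_isClosed_isBounded (isClosed_unitary (R := E3 →L[ℝ] E3)) ?_)
  refine (Metric.isBounded_closedBall (x := (0 : E3 →L[ℝ] E3)) (r := 1)).subset ?_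
  intro u hu
  rw [mem_closedBall_zero_iff]
  exact CStarRing.norm_of_mem_unitary hu |>.le

/-- There is a probability measure on linear isometries of `E3` under which the random image of a
vector has a law depending only on its norm. It is a right-invariant Haar measure on `O3` (the
image of the left Haar measure under inversion), and `O3` is transitive on spheres. -/
lemma exists_rotation_average :
    ∃ (G : Type) (_ : MeasurableSpace G) (ν : Measure G) (T : G → E3 ≃ₗᵢ[ℝ] E3),
      IsProbabilityMeasure ν ∧ Measurable (fun p : G × E3 => T p.1 p.2) ∧
      ∀ H : E3 → ℝ≥0∞, Measurable H → ∀ x y : E3, ‖x‖ = ‖y‖ →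
        ∫⁻ r, H (T r x) ∂ν = ∫⁻ r, H (T r y) ∂ν := by
  let _ : MeasurableSpace O3 := borel O3
  have : BorelSpace O3 := ⟨rfl⟩
  have : CompactSpace O3 := compactSpace_O3
  let ν₀ : Measure O3 := Measure.haarMeasure ⊤
  have hν₀ : ν₀ Set.univ = 1 := by
    have := Measure.haarMeasure_self (G := O3) (K₀ := ⊤)
    simpa using this
  have hT : Measurable (fun p : O3 × E3 => Unitary.linearIsometryEquiv p.1 p.2) := by
    have : Continuous (fun p : O3 × E3 => (p.1 : E3 →L[ℝ] E3) p.2) :=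
      (continuous_subtype_val.comp continuous_fst).clm_apply continuous_snd
    exact this.measurable
  refine ⟨O3, inferInstance, ν₀.inv, fun u => Unitary.linearIsometryEquiv u, ⟨?_⟩, hT, ?_⟩
  · rw [Measure.inv_apply]; simpa using hν₀
  · intro H hH x y hxy
    obtain ⟨S, hS⟩ := exists_reflect hxy.symm
    rw [← lintegral_mul_right_eq_self (μ := ν₀.inv)
      (fun r : O3 => H (Unitary.linearIsometryEquiv r y)) (Unitary.linearIsometryEquiv.symm S),
      ← hS]
    refine lintegral_congr fun r => congrArg H ?_
    rw [map_mul, MulEquiv.apply_symm_apply]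
    rfl

open scoped Pointwise in
lemma measurePreserving_sphere (S : E3 ≃ₗᵢ[ℝ] E3) :
    MeasurePreserving (fun σ : S2 => (⟨S σ, by simp⟩ : S2)) := by
  have hm : Measurable (fun σ : S2 => (⟨S σ, by simp⟩ : S2)) :=
    (S.continuous.measurable.comp measurable_subtype_coe).subtype_mk
  refine ⟨hm, ?_⟩
  ext s hs
  rw [Measure.map_apply hm hs]
  change (volume : Measure E3).toSphere _ = (volume : Measure E3).toSphere _
  rw [Measure.toSphere_apply' _ (hm hs), Measure.toSphere_apply' _ hs]
  congr 1
  have hS : MeasurePreserving S.toMeasurableEquiv := S.measurePreserving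
  rw [← hS.measure_preimage_equiv (Set.Ioo (0 : ℝ) 1 • (Subtype.val '' s))]
  congr 1
  ext x
  simp only [Set.mem_smul, Set.mem_image, Set.mem_preimage]
  constructor
  · rintro ⟨r, hr, _, ⟨σ, hσ, rfl⟩, rfl⟩
    exact ⟨r, hr, _, ⟨_, hσ, rfl⟩, by simp⟩
  · rintro ⟨r, hr, _, ⟨σ, hσ, rfl⟩, hx⟩
    refine ⟨r, hr, _, ⟨⟨S.symm σ, by simp⟩, by simpa using hσ, rfl⟩, ?_⟩
    apply S.injective
    simpa using hx

/-- Points of the sphere are null, as the cone over a point lies in a line. -/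
lemma volume_singleton_sphere (n : S2) : (volume : Measure S2) {n} = 0 := by
  change (volume : Measure E3).toSphere _ = 0
  rw [Measure.toSphere_apply' _ (measurableSet_singleton n)]
  have : volume (((ℝ ∙ (n : E3)) : Submodule ℝ E3) : Set E3) = 0 := by
    refine Measure.addHaar_submodule _ _ ?_
    intro h
    have := finrank_span_singleton (K := ℝ) (v := (n : E3)) (by
      intro h0; simpa [h0] using n.2)
    rw [h] at this
    simp at this
  rw [measure_mono_null _ this, mul_zero]
  rintro _ ⟨r, -, _, ⟨_, rfl, rfl⟩, rfl⟩
  exact Submodule.smul_mem _ _ (Submodule.mem_span_singleton_self _)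

instance : IsFiniteMeasure (volume : Measure S2) :=
  inferInstanceAs (IsFiniteMeasure (volume : Measure E3).toSphere)

lemma norm_e1 : ‖e1‖ = 1 := by simp [e1]

/-- Rotation invariance of angular integrals: the axis may be moved to `e1`. -/
lemma lintegral_angle {ψ : ℝ → ℝ≥0∞} (hψ : Measurable ψ) {z : E3} (hz : z ≠ 0) :
    ∫⁻ σ : S2, ψ (⟪z, (σ : E3)⟫ / ‖z‖) = ∫⁻ σ : S2, ψ (cos1 σ) := by
  have hz' : ‖z‖ ≠ 0 := norm_ne_zero_iff.2 hz
  obtain ⟨S, hS⟩ := exists_reflect (x := ‖z‖ • e1) (y := z) (by simp [norm_smul, norm_e1])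
  have hm : Measurable (fun σ : S2 => ψ (⟪z, (σ : E3)⟫ / ‖z‖)) := by fun_prop
  rw [← (measurePreserving_sphere S).lintegral_comp hm]
  refine lintegral_congr fun σ => congrArg ψ ?_
  have : ⟪z, S σ⟫ = ‖z‖ * ⟪e1, (σ : E3)⟫ := by
    conv_lhs => rw [← hS]
    rw [S.inner_map_map, inner_smul_left]; simp
  simp only [this, cos1]
  field_simp

lemma angle_le_one (z : E3) (σ : S2) : ⟪z, (σ : E3)⟫ / ‖z‖ ≤ 1 := by
  refine div_le_one_of_le₀ ?_ (norm_nonneg _)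
  simpa using real_inner_le_norm z (σ : E3)

lemma ae_angle_lt_one (z : E3) : ∀ᵐ σ : S2, ⟪z, (σ : E3)⟫ / ‖z‖ < 1 := by
  rcases eq_or_ne z 0 with rfl | hz
  · simp
  have hz' : ‖z‖ ≠ 0 := norm_ne_zero_iff.2 hz
  let n : S2 := ⟨‖z‖⁻¹ • z, by simp [norm_smul, hz']⟩
  refine measure_mono_null ?_ (volume_singleton_sphere n)
  intro σ hσ
  have h1 : ⟪z, (σ : E3)⟫ / ‖z‖ = 1 := le_antisymm (angle_le_one z σ) (not_lt.1 hσ)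
  refine (Subtype.ext ?_ : σ = n)
  have h2 : ⟪(n : E3), (σ : E3)⟫ = 1 := by
    simp only [n, inner_smul_left]
    refine Eq.trans ?_ h1
    simp; ring
  exact ((inner_eq_one_iff_of_norm_eq_one (𝕜 := ℝ) (by simp) (by simp)).1 h2).symm

/-! ### The collisional change of variables -/

/-- The displacement `v' - v` as a function of `z = v - v*` and `σ`. -/
def dev (z : E3) (σ : S2) : E3 := (‖z‖ / 2) • (σ : E3) - (2⁻¹ : ℝ) • z

/-- `|v' - v| = |v - v*| sin (θ/2)`. -/
lemma norm_dev (z : E3) (σ : S2) :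
    ‖dev z σ‖ = ‖sqrt ((1 - ⟪z, (σ : E3)⟫ / ‖z‖) / 2) • z‖ := by
  rcases eq_or_ne z 0 with rfl | hz
  · simp [dev]
  have hz' : ‖z‖ ≠ 0 := norm_ne_zero_iff.2 hz
  have h0 : 0 ≤ (1 - ⟪z, (σ : E3)⟫ / ‖z‖) / 2 := by linarith [angle_le_one z σ]
  rw [← sq_eq_sq₀ (norm_nonneg _) (norm_nonneg _), norm_smul, mul_pow, norm_eq_abs, sq_abs,
    Real.sq_sqrt h0, dev, norm_sub_sq_real, norm_smul, norm_smul, inner_smul_left,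
    inner_smul_right, real_inner_comm]
  simp
  field_simp
  ring

@[fun_prop]
lemma measurable_dev : Measurable (fun p : E3 × S2 => dev p.1 p.2) := by
  unfold dev; fun_prop

lemma lintegral_comp_smul_E3 {F : E3 → ℝ≥0∞} (hF : Measurable F) {s : ℝ} (hs : 0 < s) :
    ∫⁻ z : E3, F (s • z) = ENNReal.ofReal (s ^ (-(3 : ℝ))) * ∫⁻ z : E3, F z := by
  have := Measure.map_addHaar_smul (volume : Measure E3) hs.ne'
  rw [← lintegral_map hF (by fun_prop : Measurable (fun z : E3 => s • z)), this,
    lintegral_smul_measure, smul_eq_mul]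
  congr 2
  rw [abs_of_nonneg (by positivity), Real.rpow_neg hs.le]
  simp

/-- The change of variables `v* ↦ v'` for fixed `v`, integrated over `σ`. Rotating `z` and `σ`
simultaneously keeps the weight, so `H` may be replaced by its rotation average `M`, which is
radial. As `|dev z σ| = |z| sin (θ/2)`, the `z`-integral is then a dilation by `sin (θ/2)`, which
produces the factor `sin^{-(3+γ)} (θ/2)`. -/
lemma lintegral_dev (γ : ℝ) {Φ : ℝ → ℝ≥0∞} (hΦ : Measurable Φ) {H : E3 → ℝ≥0∞}
    (hH : Measurable H) :
    ∫⁻ z : E3, ∫⁻ σ : S2, Φ (⟪z, (σ : E3)⟫ / ‖z‖) * ENNReal.ofReal (‖z‖ ^ γ) * H (dev z σ) =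
      (∫⁻ σ : S2, Φ (cos1 σ) * ENNReal.ofReal (sinHalf1 σ ^ (-(3 + γ)))) *
        ∫⁻ z : E3, ENNReal.ofReal (‖z‖ ^ γ) * H z := by
  obtain ⟨G, _, ν, T, _, hT, hTx⟩ := exists_rotation_average
  let M : E3 → ℝ≥0∞ := fun x => ∫⁻ r, H (T r x) ∂ν
  have hTH : Measurable (fun p : E3 × G => H (T p.2 p.1)) :=
    hH.comp (hT.comp measurable_swap)
  have hM : Measurable M := hTH.lintegral_prod_right'
  have hMnorm : ∀ x y : E3, ‖x‖ = ‖y‖ → M x = M y := fun x y h => hTx H hH x y h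
  have hrot : ∀ S : E3 ≃ₗᵢ[ℝ] E3,
      ∫⁻ z : E3, ∫⁻ σ : S2, Φ (⟪z, (σ : E3)⟫ / ‖z‖) * ENNReal.ofReal (‖z‖ ^ γ) * H (dev z σ) =
      ∫⁻ z : E3, ∫⁻ σ : S2,
        Φ (⟪z, (σ : E3)⟫ / ‖z‖) * ENNReal.ofReal (‖z‖ ^ γ) * H (S (dev z σ)) := by
    intro S
    have hm : Measurable (fun p : E3 × S2 => Φ (⟪p.1, (p.2 : E3)⟫ / ‖p.1‖) *
        ENNReal.ofReal (‖p.1‖ ^ γ) * H (dev p.1 p.2)) := by fun_prop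
    rw [← S.measurePreserving.lintegral_comp hm.lintegral_prod_right']
    refine lintegral_congr fun z => ?_
    have hm' : Measurable (fun σ : S2 => Φ (⟪S z, (σ : E3)⟫ / ‖S z‖) *
        ENNReal.ofReal (‖S z‖ ^ γ) * H (dev (S z) σ)) := by fun_prop
    rw [← (measurePreserving_sphere S).lintegral_comp hm']
    refine lintegral_congr fun σ => ?_
    simp [dev, S.inner_map_map]
  have havg : ∫⁻ z : E3, ∫⁻ σ : S2,
        Φ (⟪z, (σ : E3)⟫ / ‖z‖) * ENNReal.ofReal (‖z‖ ^ γ) * H (dev z σ) =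
      ∫⁻ z : E3, ∫⁻ σ : S2,
        Φ (⟪z, (σ : E3)⟫ / ‖z‖) * ENNReal.ofReal (‖z‖ ^ γ) * M (dev z σ) := by
    have hm : Measurable (fun p : (G × E3) × S2 => Φ (⟪p.1.2, (p.2 : E3)⟫ / ‖p.1.2‖) *
        ENNReal.ofReal (‖p.1.2‖ ^ γ) * H (T p.1.1 (dev p.1.2 p.2))) := by
      have : Measurable (fun p : (G × E3) × S2 => T p.1.1 (dev p.1.2 p.2)) :=
        hT.comp (by fun_prop : Measurable (fun p : (G × E3) × S2 => (p.1.1, dev p.1.2 p.2)))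
      fun_prop
    calc _ = ∫⁻ _ : G, (∫⁻ z : E3, ∫⁻ σ : S2,
        Φ (⟪z, (σ : E3)⟫ / ‖z‖) * ENNReal.ofReal (‖z‖ ^ γ) * H (dev z σ)) ∂ν := by simp
      _ = ∫⁻ r : G, (∫⁻ z : E3, ∫⁻ σ : S2,
        Φ (⟪z, (σ : E3)⟫ / ‖z‖) * ENNReal.ofReal (‖z‖ ^ γ) * H (T r (dev z σ))) ∂ν :=
          lintegral_congr fun r => hrot (T r)
      _ = ∫⁻ z : E3, ∫⁻ r : G, (∫⁻ σ : S2,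
        Φ (⟪z, (σ : E3)⟫ / ‖z‖) * ENNReal.ofReal (‖z‖ ^ γ) * H (T r (dev z σ))) ∂ν :=
          lintegral_lintegral_swap hm.lintegral_prod_right'.aemeasurable
      _ = _ := by
        refine lintegral_congr fun z => ?_
        rw [lintegral_lintegral_swap]
        · refine lintegral_congr fun σ => ?_
          rw [lintegral_const_mul]
          exact hTH.comp measurable_prodMk_left
        · exact (hm.comp (by fun_prop : Measurable
            (fun p : G × S2 => ((p.1, z), p.2)))).aemeasurable
  have hrad : ∫⁻ z : E3, ENNReal.ofReal (‖z‖ ^ γ) * M z =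
      ∫⁻ z : E3, ENNReal.ofReal (‖z‖ ^ γ) * H z := by
    calc _ = ∫⁻ z : E3, ∫⁻ r : G, ENNReal.ofReal (‖z‖ ^ γ) * H (T r z) ∂ν := by
          refine lintegral_congr fun z => ?_
          rw [lintegral_const_mul]
          exact hTH.comp measurable_prodMk_left
      _ = ∫⁻ r : G, (∫⁻ z : E3, ENNReal.ofReal (‖z‖ ^ γ) * H (T r z)) ∂ν :=
          lintegral_lintegral_swap (Measurable.aemeasurable
            (f := fun p : E3 × G => ENNReal.ofReal (‖p.1‖ ^ γ) * H (T p.2 p.1)) (by fun_prop))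
      _ = ∫⁻ r : G, (∫⁻ z : E3, ENNReal.ofReal (‖z‖ ^ γ) * H z) ∂ν := by
          refine lintegral_congr fun r => ?_
          rw [← (T r).measurePreserving.lintegral_comp
            (by fun_prop : Measurable (fun z : E3 => ENNReal.ofReal (‖z‖ ^ γ) * H z))]
          simp
      _ = _ := by simp
  rw [havg]
  calc _ = ∫⁻ z : E3, ∫⁻ σ : S2,
        Φ (cos1 σ) * ENNReal.ofReal (‖z‖ ^ γ) * M (sinHalf1 σ • z) := by
        -- At `z = 0` the cosine is the junk value `0 / 0 = 0` for every `σ`, so that point has to be discarded.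
        have h0 : ∀ᵐ z : E3, z ≠ 0 := by simp [ae_iff]
        refine lintegral_congr_ae (h0.mono fun z hz => ?_)
        simp only [hMnorm _ _ (norm_dev z _)]
        exact lintegral_angle (ψ := fun c => Φ c * ENNReal.ofReal (‖z‖ ^ γ) *
          M (sqrt ((1 - c) / 2) • z)) (by fun_prop) hz
    _ = ∫⁻ σ : S2, ∫⁻ z : E3,
        Φ (cos1 σ) * ENNReal.ofReal (‖z‖ ^ γ) * M (sinHalf1 σ • z) := by
        refine lintegral_lintegral_swap (Measurable.aemeasurable ?_)
        unfold sinHalf1 cos1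
        fun_prop
    _ = ∫⁻ σ : S2, (Φ (cos1 σ) * ENNReal.ofReal (sinHalf1 σ ^ (-(3 + γ)))) *
          ∫⁻ z : E3, ENNReal.ofReal (‖z‖ ^ γ) * M z := by
        refine lintegral_congr_ae ((ae_angle_lt_one e1).mono fun σ hσ => ?_)
        have hs : 0 < sinHalf1 σ := by
          have : cos1 σ < 1 := by simpa [norm_e1, cos1] using hσ
          exact Real.sqrt_pos.2 (by linarith)
        set s := sinHalf1 σ
        have hpt : ∀ z : E3, Φ (cos1 σ) * ENNReal.ofReal (‖z‖ ^ γ) * M (s • z) =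
            (Φ (cos1 σ) * ENNReal.ofReal (s ^ (-γ))) *
              (ENNReal.ofReal (‖s • z‖ ^ γ) * M (s • z)) := by
          intro z
          have : ‖z‖ ^ γ = s ^ (-γ) * ‖s • z‖ ^ γ := by
            rw [norm_smul, norm_eq_abs, abs_of_pos hs, Real.mul_rpow hs.le (norm_nonneg _),
              ← mul_assoc, ← Real.rpow_add hs]
            simp
          rw [this, ENNReal.ofReal_mul (by positivity)]
          ring
        have hF : Measurable (fun z : E3 => ENNReal.ofReal (‖z‖ ^ γ) * M z) := by fun_prop
        change ∫⁻ z : E3, Φ (cos1 σ) * ENNReal.ofReal (‖z‖ ^ γ) * M (s • z) =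
          Φ (cos1 σ) * ENNReal.ofReal (s ^ (-(3 + γ))) * _
        rw [lintegral_congr hpt, lintegral_const_mul _ (by fun_prop),
          lintegral_comp_smul_E3 hF hs, neg_add_rev, Real.rpow_add hs,
          ENNReal.ofReal_mul (by positivity)]
        ring
    _ = _ := by
        rw [lintegral_mul_const, hrad]
        unfold sinHalf1 cos1
        fun_prop

/-! ### The two weighted quadratic integrals -/

/-- Cauchy–Schwarz in `[0, ∞]`, with no finiteness assumption. -/
lemma sq_lintegral_mul_le {α : Type*} [MeasurableSpace α] (μ : Measure α) {F G : α → ℝ≥0∞}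
    (hF : AEMeasurable F μ) (hG : AEMeasurable G μ) :
    (∫⁻ x, F x * G x ∂μ) ^ 2 ≤ (∫⁻ x, F x ^ 2 ∂μ) * ∫⁻ x, G x ^ 2 ∂μ := by
  have h := ENNReal.lintegral_mul_le_Lp_mul_Lq μ Real.HolderConjugate.two_two hF hG
  simp only [ENNReal.rpow_two, Pi.mul_apply] at h
  refine (pow_le_pow_left' h 2).trans_eq ?_
  rw [mul_pow, ← ENNReal.rpow_two, ← ENNReal.rpow_two, ← ENNReal.rpow_mul, ← ENNReal.rpow_mul]
  norm_num

lemma vP_sub (v z : E3) (σ : S2) : vP v (v - z) σ = v + dev z σ := by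
  simp only [vP, dev, sub_sub_cancel]
  module

@[fun_prop]
lemma measurable_vP : Measurable (fun p : (E3 × E3) × S2 => vP p.1.1 p.1.2 p.2) := by
  unfold vP; fun_prop

@[fun_prop]
lemma measurable_cosTheta : Measurable (fun p : (E3 × E3) × S2 => cosTheta p.1.1 p.1.2 p.2) := by
  unfold cosTheta; fun_prop

@[fun_prop]
lemma measurable_sinHalf : Measurable (fun p : (E3 × E3) × S2 => sinHalf p.1.1 p.1.2 p.2) := by
  unfold sinHalf; fun_prop

/-- The Cauchy–Schwarz factor carrying `f`: for fixed `v ≠ v*` the integrand depends on `σ` only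
through the deviation angle, so the angular integral splits off. -/
lemma lintegral_first (γ : ℝ) {b : ℝ → ℝ} (hb : Measurable b) (hbnn : ∀ t, 0 ≤ b t)
    {f g : E3 → ℝ} (hf : Measurable f) (hg : Measurable g) :
    ∫⁻ v : E3, ∫⁻ w : E3, ∫⁻ σ : S2, ENNReal.ofReal
        (b (cosTheta v w σ) * sinHalf v w σ ^ (-(3 + γ) / 2) * ‖v - w‖ ^ γ * g v * f w ^ 2) =
      (∫⁻ σ : S2, ENNReal.ofReal (b (cos1 σ) * sinHalf1 σ ^ (-(3 + γ) / 2))) *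
        ∫⁻ v : E3, ∫⁻ w : E3, ENNReal.ofReal (‖v - w‖ ^ γ * f w ^ 2 * g v) := by
  have hm : Measurable (fun p : E3 × E3 =>
    ENNReal.ofReal (‖p.1 - p.2‖ ^ γ * f p.2 ^ 2 * g p.1)) := by fun_prop
  rw [← lintegral_const_mul _ hm.lintegral_prod_right']
  refine lintegral_congr fun v => ?_
  rw [← lintegral_const_mul _ (by fun_prop)]
  have h0 : ∀ᵐ w : E3, w ≠ v := by simp [ae_iff]
  refine lintegral_congr_ae (h0.mono fun w hw => ?_)
  have hang := lintegral_angle (ψ := fun c => ENNReal.ofReal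
    (b c * sqrt ((1 - c) / 2) ^ (-(3 + γ) / 2))) (by fun_prop) (sub_ne_zero.2 hw.symm)
  change _ = (∫⁻ σ : S2, ENNReal.ofReal (b (cos1 σ) * sqrt ((1 - cos1 σ) / 2) ^ (-(3 + γ) / 2))) * _
  rw [← hang, ← lintegral_mul_const _ (by fun_prop)]
  refine lintegral_congr fun σ => ?_
  rw [← ENNReal.ofReal_mul (mul_nonneg (hbnn _) (by positivity))]
  congr 1
  simp only [sinHalf, cosTheta]
  ring

/-- The Cauchy–Schwarz factor carrying `h`: for fixed `v`, apply `lintegral_dev` in the variable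
`z = v - v*`. The weight `sin^{(3+γ)/2}` times the Jacobian `sin^{-(3+γ)}` gives back the same
angular constant as in `lintegral_first`. -/
lemma lintegral_second (γ : ℝ) {b : ℝ → ℝ} (hb : Measurable b) (hbnn : ∀ t, 0 ≤ b t)
    {g h : E3 → ℝ} (hg : Measurable g) (hh : Measurable h) (hgnn : ∀ v, 0 ≤ g v) :
    ∫⁻ v : E3, ∫⁻ w : E3, ∫⁻ σ : S2, ENNReal.ofReal
        (b (cosTheta v w σ) * sinHalf v w σ ^ ((3 + γ) / 2) * ‖v - w‖ ^ γ * g v *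
          h (vP v w σ) ^ 2) =
      (∫⁻ σ : S2, ENNReal.ofReal (b (cos1 σ) * sinHalf1 σ ^ (-(3 + γ) / 2))) *
        ∫⁻ v : E3, ∫⁻ w : E3, ENNReal.ofReal (‖v - w‖ ^ γ * g v * h w ^ 2) := by
  have hm : Measurable (fun p : E3 × E3 =>
    ENNReal.ofReal (‖p.1 - p.2‖ ^ γ * g p.1 * h p.2 ^ 2)) := by fun_prop
  rw [← lintegral_const_mul _ hm.lintegral_prod_right']
  refine lintegral_congr fun v => ?_
  let Φ : ℝ → ℝ≥0∞ := fun c => ENNReal.ofReal (b c * sqrt ((1 - c) / 2) ^ ((3 + γ) / 2))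
  have hΦ : Measurable Φ := by fun_prop
  let H : E3 → ℝ≥0∞ := fun y => ENNReal.ofReal (h (v + y) ^ 2)
  have hH : Measurable H := by fun_prop
  have hA : ∫⁻ σ : S2, Φ (cos1 σ) * ENNReal.ofReal (sinHalf1 σ ^ (-(3 + γ))) =
      ∫⁻ σ : S2, ENNReal.ofReal (b (cos1 σ) * sinHalf1 σ ^ (-(3 + γ) / 2)) := by
    refine lintegral_congr_ae ((ae_angle_lt_one e1).mono fun σ hσ => ?_)
    have hs : 0 < sinHalf1 σ := by
      have : cos1 σ < 1 := by simpa [norm_e1, cos1] using hσ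
      exact Real.sqrt_pos.2 (by linarith)
    change ENNReal.ofReal (b (cos1 σ) * sinHalf1 σ ^ ((3 + γ) / 2)) * _ = _
    rw [← ENNReal.ofReal_mul (mul_nonneg (hbnn _) (by positivity)), mul_assoc,
      ← Real.rpow_add hs]
    congr 3
    ring
  rw [← lintegral_sub_left_eq_self _ v, ← lintegral_add_left_eq_self (μ := volume)
    (fun w : E3 => ENNReal.ofReal (‖v - w‖ ^ γ * g v * h w ^ 2)) v]
  have key := lintegral_dev γ hΦ hH
  rw [hA] at key
  have h1 : ∀ z : E3, ENNReal.ofReal (‖v - (v + z)‖ ^ γ * g v * h (v + z) ^ 2) =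
      ENNReal.ofReal (g v) * (ENNReal.ofReal (‖z‖ ^ γ) * H z) := by
    intro z
    rw [← ENNReal.ofReal_mul (by positivity), ← ENNReal.ofReal_mul (hgnn v)]
    congr 1
    simp
    ring
  have h2 : ∀ (z : E3) (σ : S2), ENNReal.ofReal (b (cosTheta v (v - z) σ) *
      sinHalf v (v - z) σ ^ ((3 + γ) / 2) * ‖v - (v - z)‖ ^ γ * g v *
          h (vP v (v - z) σ) ^ 2) = ENNReal.ofReal (g v) *
        (Φ (⟪z, (σ : E3)⟫ / ‖z‖) * ENNReal.ofReal (‖z‖ ^ γ) * H (dev z σ)) := by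
    intro z σ
    have := hbnn (⟪z, (σ : E3)⟫ / ‖z‖)
    simp only [Φ, H]
    rw [← ENNReal.ofReal_mul (by positivity), ← ENNReal.ofReal_mul (by positivity),
      ← ENNReal.ofReal_mul (hgnn v)]
    congr 1
    simp only [vP_sub, sinHalf, cosTheta, sub_sub_cancel]
    ring
  have hm2 : Measurable (fun p : E3 × S2 => Φ (⟪p.1, (p.2 : E3)⟫ / ‖p.1‖) *
      ENNReal.ofReal (‖p.1‖ ^ γ) * H (dev p.1 p.2)) := by fun_prop
  simp only [h1, h2]
  rw [lintegral_const_mul _ (by fun_prop), mul_left_comm, ← key,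
    ← lintegral_const_mul _ hm2.lintegral_prod_right']
  refine lintegral_congr fun z => ?_
  rw [lintegral_const_mul _ (by fun_prop)]

/-! ### The estimates -/

/-- The first estimate: Cauchy–Schwarz for `F * G`, where `F` carries the weight
`sin^{-(3+γ)/2}(θ/2)` and `G` the inverse weight. -/
lemma estimate_sin (γ : ℝ) (b : ℝ → ℝ) (hb : Measurable b) (hbnn : ∀ t, 0 ≤ b t)
    (f g h : E3 → ℝ) (hf : Measurable f) (hg : Measurable g) (hh : Measurable h)
    (hfnn : ∀ v, 0 ≤ f v) (hgnn : ∀ v, 0 ≤ g v) (hhnn : ∀ v, 0 ≤ h v) :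
    (∫⁻ v : E3, ∫⁻ w : E3, ∫⁻ σ : S2,
        ENNReal.ofReal (b (cosTheta v w σ) * ‖v - w‖ ^ γ * f w * g v * h (vP v w σ))) ^ 2 ≤
      (∫⁻ σ : S2, ENNReal.ofReal (b (cos1 σ) * sinHalf1 σ ^ (-(3 + γ) / 2))) ^ 2 *
        (∫⁻ v : E3, ∫⁻ w : E3, ENNReal.ofReal (‖v - w‖ ^ γ * f w ^ 2 * g v)) *
        (∫⁻ v : E3, ∫⁻ w : E3, ENNReal.ofReal (‖v - w‖ ^ γ * g v * h w ^ 2)) := by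
  let X : ℝ → (E3 × E3) × S2 → ℝ := fun a p =>
    b (cosTheta p.1.1 p.1.2 p.2) * sinHalf p.1.1 p.1.2 p.2 ^ a * ‖p.1.1 - p.1.2‖ ^ γ * g p.1.1
  have hX : ∀ a, Measurable (X a) := fun a => by fun_prop
  have hX0 : ∀ a p, 0 ≤ X a p := fun a p => by
    have := hbnn (cosTheta p.1.1 p.1.2 p.2)
    have := hgnn p.1.1
    have : 0 ≤ sinHalf p.1.1 p.1.2 p.2 := Real.sqrt_nonneg _
    positivity
  let F : (E3 × E3) × S2 → ℝ≥0∞ := fun p =>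
    ENNReal.ofReal (sqrt (X (-(3 + γ) / 2) p) * f p.1.2)
  let G : (E3 × E3) × S2 → ℝ≥0∞ := fun p =>
    ENNReal.ofReal (sqrt (X ((3 + γ) / 2) p) * h (vP p.1.1 p.1.2 p.2))
  have hF : Measurable F := by fun_prop
  have hG : Measurable G := by fun_prop
  have triple : ∀ K : (E3 × E3) × S2 → ℝ≥0∞, Measurable K →
      ∫⁻ p, K p = ∫⁻ v : E3, ∫⁻ w : E3, ∫⁻ σ : S2, K ((v, w), σ) := by
    intro K hK
    rw [Measure.volume_eq_prod, lintegral_prod _ hK.aemeasurable, Measure.volume_eq_prod,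
      lintegral_prod _ hK.lintegral_prod_right'.aemeasurable]
  have hFG : ∫⁻ v : E3, ∫⁻ w : E3, ∫⁻ σ : S2,
        ENNReal.ofReal (b (cosTheta v w σ) * ‖v - w‖ ^ γ * f w * g v * h (vP v w σ)) =
      ∫⁻ p, F p * G p := by
    rw [triple (fun p => F p * G p) (hF.mul hG)]
    refine lintegral_congr fun v => lintegral_congr fun w =>
      lintegral_congr_ae ((ae_angle_lt_one (v - w)).mono fun σ hσ => ?_)
    -- The two weights cancel only where `sin (θ/2) ≠ 0`, because `0 ^ a * 0 ^ (-a) = 0` for `a ≠ 0`.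
    have hs : 0 < sinHalf v w σ := Real.sqrt_pos.2 (by unfold cosTheta; linarith)
    have hfw := hfnn w
    simp only [F, G]
    rw [← ENNReal.ofReal_mul (by positivity)]
    congr 1
    have hXX : sqrt (X (-(3 + γ) / 2) ((v, w), σ)) * sqrt (X ((3 + γ) / 2) ((v, w), σ)) =
        b (cosTheta v w σ) * ‖v - w‖ ^ γ * g v := by
      rw [← Real.sqrt_mul (hX0 _ _), Real.sqrt_eq_iff_mul_self_eq
        (mul_nonneg (hX0 _ _) (hX0 _ _))]
      · have : sinHalf v w σ ^ (-(3 + γ) / 2) * sinHalf v w σ ^ ((3 + γ) / 2) = 1 := by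
          rw [← Real.rpow_add hs]
          ring_nf
          simp
        simp only [X]
        linear_combination (b (cosTheta v w σ) * ‖v - w‖ ^ γ * g v) ^ 2 * this
      · have := hbnn (cosTheta v w σ)
        have := hgnn v
        positivity
    linear_combination -(f w * h (vP v w σ)) * hXX
  have hF2 : ∫⁻ p, F p ^ 2 =
      (∫⁻ σ : S2, ENNReal.ofReal (b (cos1 σ) * sinHalf1 σ ^ (-(3 + γ) / 2))) *
        ∫⁻ v : E3, ∫⁻ w : E3, ENNReal.ofReal (‖v - w‖ ^ γ * f w ^ 2 * g v) := by
    rw [triple _ (hF.pow_const 2), ← lintegral_first γ hb hbnn hf hg]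
    refine lintegral_congr fun v => lintegral_congr fun w => lintegral_congr fun σ => ?_
    simp only [F]
    rw [← ENNReal.ofReal_pow (mul_nonneg (Real.sqrt_nonneg _) (hfnn _)), mul_pow,
      Real.sq_sqrt (hX0 _ _)]
  have hG2 : ∫⁻ p, G p ^ 2 =
      (∫⁻ σ : S2, ENNReal.ofReal (b (cos1 σ) * sinHalf1 σ ^ (-(3 + γ) / 2))) *
        ∫⁻ v : E3, ∫⁻ w : E3, ENNReal.ofReal (‖v - w‖ ^ γ * g v * h w ^ 2) := by
    rw [triple _ (hG.pow_const 2), ← lintegral_second γ hb hbnn hg hh hgnn]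
    refine lintegral_congr fun v => lintegral_congr fun w => lintegral_congr fun σ => ?_
    simp only [G]
    rw [← ENNReal.ofReal_pow (mul_nonneg (Real.sqrt_nonneg _) (hhnn _)), mul_pow,
      Real.sq_sqrt (hX0 _ _)]
  rw [hFG]
  refine (sq_lintegral_mul_le _ hF.aemeasurable hG.aemeasurable).trans_eq ?_
  rw [hF2, hG2]
  ring

lemma vP_comm (v w : E3) (σ : S2) : vP v w σ = vP w v σ := by
  simp only [vP, add_comm v w, norm_sub_rev v w]

lemma cosTheta_swap (v w : E3) (σ : S2) : cosTheta v w σ = -cosTheta w v σ := by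
  rw [cosTheta, cosTheta, ← neg_sub w v, inner_neg_left, norm_neg, neg_div]

/-- The reflection `σ ↦ -σ` exchanges `cos (θ/2)` and `sin (θ/2)`; here it is obtained from
`lintegral_angle` with `-e1` in place of `e1`. -/
lemma lintegral_cos_eq_sin (γ : ℝ) {b : ℝ → ℝ} (hb : Measurable b) :
    ∫⁻ σ : S2, ENNReal.ofReal (b (cos1 σ) * cosHalf1 σ ^ (-(3 + γ) / 2)) =
      ∫⁻ σ : S2, ENNReal.ofReal (b (-cos1 σ) * sinHalf1 σ ^ (-(3 + γ) / 2)) := by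
  have he : -e1 ≠ 0 := neg_ne_zero.2 (norm_ne_zero_iff.1 (by simp [norm_e1]))
  have := lintegral_angle (ψ := fun c => ENNReal.ofReal
    (b c * sqrt ((1 + c) / 2) ^ (-(3 + γ) / 2))) (by fun_prop) he
  refine this.symm.trans (lintegral_congr fun σ => ?_)
  simp [norm_e1, cos1, sinHalf1, inner_neg_left, sub_eq_add_neg]

/-- two Cauchy–Schwarz estimates for the trilinear collision integral. -/
theorem stmt0 (γ : ℝ) (b : ℝ → ℝ) (hb : Measurable b) (hbnn : ∀ t, 0 ≤ b t)
    (f g h : E3 → ℝ) (hf : Measurable f) (hg : Measurable g) (hh : Measurable h)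
    (hfnn : ∀ v, 0 ≤ f v) (hgnn : ∀ v, 0 ≤ g v) (hhnn : ∀ v, 0 ≤ h v) :
    ((∫⁻ v : E3, ∫⁻ w : E3, ∫⁻ σ : S2,
        ENNReal.ofReal (b (cosTheta v w σ) * ‖v - w‖ ^ γ * f w * g v * h (vP v w σ))) ^ 2 ≤
      (∫⁻ σ : S2, ENNReal.ofReal (b (cos1 σ) * sinHalf1 σ ^ (-(3 + γ) / 2))) ^ 2 *
        (∫⁻ v : E3, ∫⁻ w : E3, ENNReal.ofReal (‖v - w‖ ^ γ * f w ^ 2 * g v)) *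
        (∫⁻ v : E3, ∫⁻ w : E3, ENNReal.ofReal (‖v - w‖ ^ γ * g v * h w ^ 2))) ∧
    ((∫⁻ v : E3, ∫⁻ w : E3, ∫⁻ σ : S2,
        ENNReal.ofReal (b (cosTheta v w σ) * ‖v - w‖ ^ γ * f w * g v * h (vP v w σ))) ^ 2 ≤
      (∫⁻ σ : S2, ENNReal.ofReal (b (cos1 σ) * cosHalf1 σ ^ (-(3 + γ) / 2))) ^ 2 *
        (∫⁻ v : E3, ∫⁻ w : E3, ENNReal.ofReal (‖v - w‖ ^ γ * f w * g v ^ 2)) *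
        (∫⁻ w : E3, ∫⁻ u : E3, ENNReal.ofReal (‖w - u‖ ^ γ * f w * h u ^ 2))) := by
  refine ⟨estimate_sin γ b hb hbnn f g h hf hg hh hfnn hgnn hhnn, ?_⟩
  -- Exchanging `v` and `v*` turns `θ` into `π - θ`, hence `b t` into `b (-t)` and `sin` into `cos`.
  have key := estimate_sin γ (fun t => b (-t)) (by fun_prop) (fun t => hbnn _) g f h hg hf hh
    hgnn hfnn hhnn
  rw [← lintegral_cos_eq_sin γ hb] at key
  have hm : Measurable (fun p : (E3 × E3) × S2 => ENNReal.ofReal (b (cosTheta p.1.1 p.1.2 p.2) *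
      ‖p.1.1 - p.1.2‖ ^ γ * f p.1.2 * g p.1.1 * h (vP p.1.1 p.1.2 p.2))) := by fun_prop
  have hL : ∫⁻ v : E3, ∫⁻ w : E3, ∫⁻ σ : S2,
        ENNReal.ofReal (b (cosTheta v w σ) * ‖v - w‖ ^ γ * f w * g v * h (vP v w σ)) =
      ∫⁻ v : E3, ∫⁻ w : E3, ∫⁻ σ : S2,
        ENNReal.ofReal (b (-cosTheta v w σ) * ‖v - w‖ ^ γ * g w * f v * h (vP v w σ)) := by
    rw [lintegral_lintegral_swap hm.lintegral_prod_right'.aemeasurable]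
    refine lintegral_congr fun v => lintegral_congr fun w => lintegral_congr fun σ => ?_
    rw [cosTheta_swap w v, norm_sub_rev w v, vP_comm w v]
    congr 1
    ring
  have hB : ∫⁻ v : E3, ∫⁻ w : E3, ENNReal.ofReal (‖v - w‖ ^ γ * f w * g v ^ 2) =
      ∫⁻ v : E3, ∫⁻ w : E3, ENNReal.ofReal (‖v - w‖ ^ γ * g w ^ 2 * f v) := by
    rw [lintegral_lintegral_swap (by fun_prop)]
    refine lintegral_congr fun v => lintegral_congr fun w => ?_
    rw [norm_sub_rev w v]
    congr 1
    ring
  rw [hL, hB]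
  exact key

end
end

section
/- Let −3 < γ ≤ 1, a > 0 and b ∈ (0,2). Then there exists a constant C_{a,b} > 0 (depending also on γ) such that for all v ∈ ℝ³, ∫_{ℝ³}∫_{S²} |v−v*|^γ e^{a⟨v⟩^b − a⟨v'⟩^b} e^{−|v*'|²/2} dσ dv* ≤ C_{a,b} ⟨v⟩^{γ − b(γ+3)/4}. -/
/-!
Write `R = ‖v‖`, `X = 1 + ‖v‖²`, `y = ‖w‖²`, `s = ‖v*'‖²`.

Conservation of energy gives `1 + ‖v'‖² = X + y - s`. Concavity of `t ↦ t ^ (b / 2)` when `s ≤ y`,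
and its subadditivity together with Young's inequality when `s > y`, bound the exponential weight
by `exp (K - c y (X + y) ^ (b / 2 - 1) - s / 4)` for all collisions (`exponent_bound`,
`weight_bound`).

If `R ≥ 1` and `‖w‖ ≤ R / 2`, three effects combine (`inner_region`). The kinetic factor is of
order `⟨v⟩ ^ γ`. The post-collision velocity `v*'` runs over a sphere of radius comparable with
`⟨v⟩`, so a Gaussian in `v*'` integrates over that sphere to `O(⟨v⟩⁻²)` (`sphere_gauss`). Finally
`‖v*'‖ ≥ (2 / 3) |⟪v / R, w⟫|` (`vsP_lower`), so half of the Gaussian confines `w` in the direction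
of `v`, whereas `exp (-c y (X + y) ^ (b / 2 - 1))` confines the other two directions at the scale
`⟨v⟩ ^ (1 - b / 2)`; the integral over `w` is thus `O(⟨v⟩ ^ (2 - b))` (`aniso_gauss`). In total
this region contributes `O(⟨v⟩ ^ (γ - b))`.

Otherwise `X ≤ 4 (1 + y)`, and the weight is at most a constant times
`exp (-c' ⟨v⟩ ^ b) exp (-c' ⟨w⟩ ^ b)` (`outer_region`). Since `γ > -3`, the integral of
`‖v - w‖ ^ γ` against the second factor is `O(⟨v⟩)` (`singular_weight`), so the contribution decays
faster than any power.

Hence the integral is `O(⟨v⟩ ^ (γ - b))`, which is stronger than the claim because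
`(γ + 3) / 4 ≤ 1`.
-/

open MeasureTheory Real
open scoped ENNReal RealInnerProductSpace Classical

noncomputable section

/-! ### Bounding the exponential weight -/

lemma young_aux (a β : ℝ) (ha : 0 < a) (h0 : 0 < β) (h1 : β < 1) :
    ∃ K : ℝ, 0 ≤ K ∧ ∀ d : ℝ, 0 ≤ d → a * d ^ β ≤ d / 4 + K := by
  have h4 : 0 < 4 * a := by positivity
  -- the threshold at which `a * D ^ (β - 1) = 1 / 4`
  set D : ℝ := (4 * a) ^ (1 / (1 - β)) with hD
  have hDpos : 0 < D := Real.rpow_pos_of_pos h4 _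
  have hDβ : D ^ (β - 1) = (4 * a)⁻¹ := by
    rw [hD, ← Real.rpow_mul h4.le, ← Real.rpow_neg_one]
    congr 1
    have : (1 - β) ≠ 0 := by linarith
    field_simp
    ring
  refine ⟨a * D ^ β, by positivity, fun d hd => ?_⟩
  rcases le_total d D with h | h
  · have : d ^ β ≤ D ^ β := Real.rpow_le_rpow hd h h0.le
    nlinarith
  · have hdpos : 0 < d := hDpos.trans_le h
    have e1 : d ^ β = d ^ (β - 1) * d := by
      rw [← Real.rpow_add_one hdpos.ne']; ring_nf
    have e2 : d ^ (β - 1) ≤ (4 * a)⁻¹ := by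
      rw [← hDβ]; exact Real.rpow_le_rpow_of_nonpos hDpos h (by linarith)
    have e3 : a * d ^ β ≤ a * ((4 * a)⁻¹ * d) := by
      rw [e1]; gcongr
    have e4 : a * ((4 * a)⁻¹ * d) = d / 4 := by field_simp
    have : 0 ≤ a * D ^ β := by positivity
    linarith

/-- The exponent of the weight in terms of `X = 1 + ‖v‖²`, `y = ‖w‖²`, `s = ‖v*'‖²` and
`T = 1 + ‖v'‖²`, with `β = b / 2`. Collisions that increase the energy of the first particle
(`s ≤ y`) are handled by concavity, the others by subadditivity of `t ↦ t ^ β`. -/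
lemma exponent_bound (a β : ℝ) (ha : 0 < a) (h0 : 0 < β) (h1 : β < 1) :
    ∃ c K : ℝ, 0 < c ∧ 0 ≤ K ∧ ∀ X y s T : ℝ, 1 ≤ X → 0 ≤ y → 0 ≤ s → 1 ≤ T → T = X + y - s →
      a * X ^ β - a * T ^ β - s / 2 ≤ K - c * y * (X + y) ^ (β - 1) - s / 4 := by
  obtain ⟨K, hK, hY⟩ := young_aux a β ha h0 h1
  refine ⟨min (a * β) (1 / 4), K, by positivity, hK, fun X y s T hX hy hs hT hTe => ?_⟩
  set c := min (a * β) (1 / 4) with hc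
  have hc0 : 0 < c := by positivity
  have hc1 : c ≤ a * β := min_le_left _ _
  have hc2 : c ≤ 1 / 4 := min_le_right _ _
  set q := (X + y) ^ (β - 1) with hq
  have hq0 : 0 < q := Real.rpow_pos_of_pos (by linarith) _
  have hq1 : q ≤ 1 := Real.rpow_le_one_of_one_le_of_nonpos (by linarith) (by linarith)
  have hcq : c * q ≤ 1 / 4 := by nlinarith
  have hTpos : 0 < T := by linarith
  rcases le_total s y with h | h
  · -- concavity of `t ↦ t ^ β`, in the form of Bernoulli's inequality
    have hb : (1 + (X / T - 1)) ^ β ≤ 1 + β * (X / T - 1) :=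
      rpow_one_add_le_one_add_mul_self (by
        have : 0 ≤ X / T := by positivity
        linarith) h0.le h1.le
    have e1 : (1 + (X / T - 1)) ^ β = X ^ β / T ^ β := by
      rw [← Real.div_rpow (by linarith) hTpos.le]; ring_nf
    have hTβ : 0 < T ^ β := Real.rpow_pos_of_pos hTpos _
    rw [e1, div_le_iff₀ hTβ] at hb
    have e2 : T ^ β = T ^ (β - 1) * T := by
      rw [← Real.rpow_add_one hTpos.ne']; ring_nf
    have e3 : (1 + β * (X / T - 1)) * T ^ β = T ^ β - β * (y - s) * T ^ (β - 1) := by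
      have : X / T - 1 = -(y - s) / T := by field_simp; linarith
      rw [this]
      nth_rewrite 1 [e2]
      rw [e2]
      field_simp
      ring
    have e4 : q ≤ T ^ (β - 1) :=
      Real.rpow_le_rpow_of_nonpos hTpos (by linarith) (by linarith)
    have e5 : c * ((y - s) * q) ≤ a * β * ((y - s) * T ^ (β - 1)) := by
      have : 0 ≤ y - s := by linarith
      gcongr
    rw [e3] at hb
    have e6 : c * q * s ≤ 1 / 4 * s := by gcongr
    nlinarith
  · -- the energy lost is at most `s - y`, and is paid for by half of the Gaussian
    have hd : 0 ≤ s - y := by linarith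
    have e1 : X ^ β ≤ T ^ β + (s - y) ^ β := by
      have : X = T + (s - y) := by linarith
      rw [this]
      exact Real.rpow_add_le_add_rpow hTpos.le hd h0.le h1.le
    have e2 := hY _ hd
    have e6 : c * q * y ≤ 1 / 4 * y := by gcongr
    nlinarith

lemma rpow_le_exp (c b N : ℝ) (hc : 0 < c) (hb : 0 < b) :
    ∃ C : ℝ, 0 < C ∧ ∀ t : ℝ, 1 ≤ t → t ^ N ≤ C * Real.exp (c * t ^ b) := by
  obtain ⟨n, hn⟩ := exists_nat_ge (N / b)
  refine ⟨n.factorial / c ^ n, by positivity, fun t ht => ?_⟩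
  have ht0 : 0 < t := by linarith
  have e1 : t ^ N ≤ (t ^ b) ^ n := by
    rw [← Real.rpow_natCast, ← Real.rpow_mul ht0.le]
    apply Real.rpow_le_rpow_of_exponent_le ht
    rw [div_le_iff₀ hb] at hn
    linarith
  have e2 := Real.pow_div_factorial_le_exp (x := c * t ^ b) (by positivity) n
  rw [mul_pow] at e2
  refine e1.trans ?_
  rw [div_le_iff₀ (by positivity)] at e2
  rw [div_mul_eq_mul_div, le_div_iff₀ (by positivity)]
  linarith

/-! ### Geometry of a collision -/

/-- Conservation of kinetic energy. -/
lemma energy (v w : E3) (σ : S2) : ‖vP v w σ‖ ^ 2 + ‖vsP v w σ‖ ^ 2 = ‖v‖ ^ 2 + ‖w‖ ^ 2 := by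
  have hσ : ‖(σ : E3)‖ = 1 := by simp
  have h1 := parallelogram_law_with_norm ℝ ((2⁻¹ : ℝ) • (v + w)) ((‖v - w‖ / 2) • (σ : E3))
  have h2 := parallelogram_law_with_norm ℝ v w
  have h3 : ‖(2⁻¹ : ℝ) • (v + w)‖ = ‖v + w‖ / 2 := by
    rw [norm_smul]; norm_num; ring
  have h4 : ‖(‖v - w‖ / 2) • (σ : E3)‖ = ‖v - w‖ / 2 := by
    rw [norm_smul, hσ, mul_one, Real.norm_of_nonneg (by positivity)]
  rw [h3, h4] at h1
  unfold vP vsP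
  nlinarith

/-- The sphere described by `v*'` has centre `(v + w) / 2` and radius `‖v - w‖ / 2`, so
`‖v*'‖ ≥ |‖v + w‖ - ‖v - w‖| / 2`; this is compared with `⟪v, w⟫` through
`‖v + w‖² - ‖v - w‖² = 4 ⟪v, w⟫`. -/
lemma vsP_lower (v w : E3) (σ : S2) (hv : v ≠ 0) (hw : ‖w‖ ≤ ‖v‖ / 2) :
    4 / 9 * ⟪(‖v‖⁻¹ : ℝ) • v, w⟫ ^ 2 ≤ ‖vsP v w σ‖ ^ 2 := by
  have hσ : ‖(σ : E3)‖ = 1 := by simp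
  have hR : 0 < ‖v‖ := norm_pos_iff.2 hv
  have h3 : ‖(2⁻¹ : ℝ) • (v + w)‖ = ‖v + w‖ / 2 := by
    rw [norm_smul]; norm_num; ring
  have h4 : ‖(‖v - w‖ / 2) • (σ : E3)‖ = ‖v - w‖ / 2 := by
    rw [norm_smul, hσ, mul_one, Real.norm_of_nonneg (by positivity)]
  have h5 := abs_norm_sub_norm_le ((2⁻¹ : ℝ) • (v + w)) ((‖v - w‖ / 2) • (σ : E3))
  rw [h3, h4] at h5
  change _ ≤ ‖vsP v w σ‖ at h5
  have ha := norm_add_sq_real v w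
  have hb := norm_sub_sq_real v w
  have hp : ‖v + w‖ ≤ 3 / 2 * ‖v‖ := (norm_add_le _ _).trans (by linarith)
  have hm : ‖v - w‖ ≤ 3 / 2 * ‖v‖ := (norm_sub_le _ _).trans (by linarith)
  have h6 : |⟪v, w⟫| ≤ 3 / 2 * ‖v‖ * ‖vsP v w σ‖ := by
    have : ⟪v, w⟫ = (‖v + w‖ / 2 - ‖v - w‖ / 2) * ((‖v + w‖ + ‖v - w‖) / 2) := by
      nlinarith
    rw [this, abs_mul, abs_of_nonneg (a := (‖v + w‖ + ‖v - w‖) / 2) (by positivity), mul_comm]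
    gcongr
    linarith
  rw [inner_smul_left, mul_pow]
  simp only [conj_trivial]
  have h7 : ⟪v, w⟫ ^ 2 ≤ (3 / 2 * ‖v‖ * ‖vsP v w σ‖) ^ 2 := sq_le_sq' (by
    have := neg_abs_le ⟪v, w⟫; linarith) ((le_abs_self _).trans h6)
  calc 4 / 9 * ((‖v‖⁻¹) ^ 2 * ⟪v, w⟫ ^ 2) ≤
      4 / 9 * ((‖v‖⁻¹) ^ 2 * (3 / 2 * ‖v‖ * ‖vsP v w σ‖) ^ 2) := by gcongr
    _ = ‖vsP v w σ‖ ^ 2 := by field_simp; ring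

/-! ### Gaussian integrals -/

/-- Polar coordinates in ℝ³. -/
lemma lintegral_polar (f : E3 → ℝ≥0∞) (hf : Measurable f) :
    ∫⁻ x, f x = ∫⁻ r : Set.Ioi (0 : ℝ), (∫⁻ σ : S2, f ((r : ℝ) • (σ : E3)))
      ∂(Measure.volumeIoiPow 2) := by
  have hd : Module.finrank ℝ E3 - 1 = 2 := by simp
  have key := (volume : Measure E3).measurePreserving_homeomorphUnitSphereProd
  rw [hd] at key
  have hm : Measurable fun p : S2 × Set.Ioi (0 : ℝ) => f ((p.2 : ℝ) • (p.1 : E3)) := by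
    apply hf.comp; fun_prop
  calc ∫⁻ x, f x = ∫⁻ x in ({0}ᶜ : Set E3), f x := by
        rw [restrict_compl_singleton]
    _ = ∫⁻ x : ({(0)}ᶜ : Set E3), f x.1 ∂((volume : Measure E3).comap (↑)) := by
        rw [lintegral_subtype_comap (measurableSet_singleton _).compl]
    _ = ∫⁻ p : S2 × Set.Ioi (0 : ℝ), f ((p.2 : ℝ) • (p.1 : E3))
          ∂((volume : Measure E3).toSphere.prod (Measure.volumeIoiPow 2)) := by
        rw [← key.lintegral_comp hm]
        apply lintegral_congr
        intro x
        congr 1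
        have := norm_ne_zero_iff.2 x.2
        simp [smul_smul, mul_inv_cancel₀ this]
    _ = _ := by
        rw [lintegral_prod_symm' _ hm]
        rfl

/-- A Gaussian with any centre has integral `O(ρ⁻²)` over the unit sphere rescaled to radius `ρ`.
On the shell `ρ ≤ r < ρ + 1`, of volume at least of order `ρ²`, the value at `ρ σ` is controlled by
a wider Gaussian at `r σ`, whose total integral over ℝ³ does not depend on `p` or `ρ`. -/
lemma sphere_gauss : ∃ C : ℝ, 0 < C ∧ ∀ (p : E3) (ρ : ℝ), 0 < ρ →
    ∫⁻ σ : S2, ENNReal.ofReal (Real.exp (-‖p - ρ • (σ : E3)‖ ^ 2 / 8)) ≤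
      ENNReal.ofReal (C / ρ ^ 2) := by
  have hint : Integrable (fun x : E3 => Real.exp (-(1 / 16) * ‖x‖ ^ 2)) := by
    have := GaussianFourier.integrable_cexp_neg_mul_sq_norm_add (b := (1 / 16 : ℂ)) (by norm_num) 0
      (0 : E3)
    have h2 := this.norm
    refine h2.congr (.of_forall fun x => ?_)
    simp only [Complex.norm_exp]
    congr 1
    simp [← Complex.ofReal_pow]
  set G : ℝ := ∫ x : E3, Real.exp (-(1 / 16) * ‖x‖ ^ 2)
  have hG : 0 < G := integral_exp_pos hint
  refine ⟨Real.exp (1 / 8) * G, by positivity, fun p ρ hρ => ?_⟩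
  set f : E3 → ℝ≥0∞ := fun x => ENNReal.ofReal (Real.exp (-(1 / 16) * ‖x - p‖ ^ 2)) with hf
  have hfm : Measurable f := by fun_prop
  have h1 : ∫⁻ x, f x = ENNReal.ofReal G := by
    rw [lintegral_sub_right_eq_self (fun x : E3 => ENNReal.ofReal (Real.exp (-(1 / 16) * ‖x‖ ^ 2))) p,
      ofReal_integral_eq_lintegral_ofReal hint (.of_forall fun x => (Real.exp_pos _).le)]
  set M := ∫⁻ σ : S2, ENNReal.ofReal (Real.exp (-‖p - ρ • (σ : E3)‖ ^ 2 / 8))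
  set ρ0 : Set.Ioi (0 : ℝ) := ⟨ρ, hρ⟩
  set ρ1 : Set.Ioi (0 : ℝ) := ⟨ρ + 1, by simp; linarith⟩
  have hle : ρ0 ≤ ρ1 := by
    change ρ ≤ ρ + 1
    linarith
  have hS : ENNReal.ofReal (ρ ^ 2) ≤ Measure.volumeIoiPow 2 (Set.Iio ρ1 \ Set.Iio ρ0) := by
    rw [measure_sdiff (Set.Iio_subset_Iio hle) measurableSet_Iio.nullMeasurableSet
      (by simp [Measure.volumeIoiPow_apply_Iio]), Measure.volumeIoiPow_apply_Iio,
      Measure.volumeIoiPow_apply_Iio, ← ENNReal.ofReal_sub _ (by positivity)]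
    apply ENNReal.ofReal_le_ofReal
    norm_num
    nlinarith
  have h2 : ∀ r ∈ (Set.Iio ρ1 \ Set.Iio ρ0), M ≤ ENNReal.ofReal (Real.exp (1 / 8)) *
      ∫⁻ σ : S2, f ((r : ℝ) • (σ : E3)) := by
    intro r hr
    rw [← lintegral_const_mul' _ _ ENNReal.ofReal_ne_top]
    apply lintegral_mono
    intro σ
    have hσ : ‖(σ : E3)‖ = 1 := by simp
    simp only [hf]
    rw [← ENNReal.ofReal_mul (by positivity), ← Real.exp_add]
    apply ENNReal.ofReal_le_ofReal
    apply Real.exp_le_exp.2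
    have hr1 : (r : ℝ) < ρ + 1 := hr.1
    have hr2 : ρ ≤ (r : ℝ) := not_lt.1 hr.2
    have h3 : ‖(r : ℝ) • (σ : E3) - p‖ ≤ ‖p - ρ • (σ : E3)‖ + 1 := by
      have : (r : ℝ) • (σ : E3) - p = ((r : ℝ) - ρ) • (σ : E3) - (p - ρ • (σ : E3)) := by module
      rw [this]
      refine (norm_sub_le _ _).trans ?_
      rw [norm_smul, hσ, Real.norm_of_nonneg (by linarith)]
      linarith
    have := pow_le_pow_left₀ (norm_nonneg _) h3 2
    nlinarith [sq_nonneg (‖p - ρ • (σ : E3)‖ - 1)]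
  have h3 : M * ENNReal.ofReal (ρ ^ 2) ≤ ENNReal.ofReal (Real.exp (1 / 8)) * ENNReal.ofReal G := by
    calc M * ENNReal.ofReal (ρ ^ 2) ≤ M * Measure.volumeIoiPow 2 (Set.Iio ρ1 \ Set.Iio ρ0) := by
          gcongr
      _ = ∫⁻ r in (Set.Iio ρ1 \ Set.Iio ρ0), M ∂(Measure.volumeIoiPow 2) := by
          rw [setLIntegral_const]
      _ ≤ ∫⁻ r in (Set.Iio ρ1 \ Set.Iio ρ0), ENNReal.ofReal (Real.exp (1 / 8)) *
            (∫⁻ σ : S2, f ((r : ℝ) • (σ : E3))) ∂(Measure.volumeIoiPow 2) :=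
          setLIntegral_mono' (measurableSet_Iio.diff measurableSet_Iio) h2
      _ ≤ ∫⁻ r, ENNReal.ofReal (Real.exp (1 / 8)) *
            (∫⁻ σ : S2, f ((r : ℝ) • (σ : E3))) ∂(Measure.volumeIoiPow 2) := setLIntegral_le_lintegral _ _
      _ = _ := by
          rw [lintegral_const_mul' _ _ ENNReal.ofReal_ne_top, ← lintegral_polar f hfm, h1]
  rw [← ENNReal.ofReal_mul (by positivity)] at h3
  rw [ENNReal.ofReal_div_of_pos (by positivity)]
  rw [ENNReal.le_div_iff_mul_le (Or.inl (by positivity)) (Or.inl ENNReal.ofReal_ne_top)]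
  exact h3

/-- In an orthonormal basis starting with `e` the integrand is dominated by a product of
one-dimensional Gaussians, of width `O(1)` along `e` and `l ^ (-1/2)` in the two other directions. -/
lemma aniso_gauss : ∃ C : ℝ, 0 < C ∧ ∀ (e : E3) (l : ℝ), ‖e‖ = 1 → 0 < l →
    ∫⁻ w : E3, ENNReal.ofReal (Real.exp (-(l * ‖w‖ ^ 2) - ⟪e, w⟫ ^ 2 / 18)) ≤
      ENNReal.ofReal (C / l) := by
  refine ⟨√(π * 18) * π, by positivity, fun e l he hl => ?_⟩
  obtain ⟨B, hB⟩ := Orthonormal.exists_orthonormalBasis_extension_of_card_eq (𝕜 := ℝ) (E := E3)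
    (ι := Fin 3) (by simp) (v := fun _ => e) (s := {0}) (by
      rw [orthonormal_iff_ite]
      rintro ⟨i, hi⟩ ⟨j, hj⟩
      simp at hi hj
      subst hi hj
      simp [he])
  have hB0 : B 0 = e := hB 0 rfl
  set g : Fin 3 → ℝ → ℝ := fun i t => if i = 0 then Real.exp (-(1 / 18) * t ^ 2) else
    Real.exp (-l * t ^ 2) with hg
  have hgi : ∀ i, Integrable (g i) := by
    intro i
    by_cases h : i = 0
    · simp only [hg, h, if_true]; exact integrable_exp_neg_mul_sq (by norm_num)
    · simp only [hg, h, if_false]; exact integrable_exp_neg_mul_sq hl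
  have hmp := (PiLp.volume_preserving_ofLp (Fin 3)).comp B.measurePreserving_repr
  calc ∫⁻ w : E3, ENNReal.ofReal (Real.exp (-(l * ‖w‖ ^ 2) - ⟪e, w⟫ ^ 2 / 18))
      ≤ ∫⁻ w : E3, ENNReal.ofReal (∏ i, g i ((WithLp.ofLp (B.repr w)) i)) := by
        apply lintegral_mono
        intro w
        apply ENNReal.ofReal_le_ofReal
        have hn : ‖w‖ ^ 2 = ∑ i, (B.repr w i) ^ 2 := by
          rw [← B.repr.norm_map w, EuclideanSpace.norm_sq_eq]
          simp
        simp only [Fin.prod_univ_three, hg]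
        have h20 : (2 : Fin 3) ≠ 0 := by decide
        simp only [if_true, one_ne_zero, h20, if_false]
        rw [← Real.exp_add, ← Real.exp_add]
        apply Real.exp_le_exp.2
        rw [hn, Fin.sum_univ_three, B.repr_apply_apply w 0, hB0]
        nlinarith [mul_nonneg hl.le (sq_nonneg ⟪e, w⟫)]
    _ = ∫⁻ x : Fin 3 → ℝ, ENNReal.ofReal (∏ i, g i (x i)) := by
        have hm : Measurable fun x : Fin 3 → ℝ => ENNReal.ofReal (∏ i, g i (x i)) := by
          apply Measurable.ennreal_ofReal
          apply Finset.measurable_prod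
          intro i _
          have : Continuous (g i) := by
            by_cases h : i = 0
            · simp only [hg, h, if_true]; fun_prop
            · simp only [hg, h, if_false]; fun_prop
          exact this.measurable.comp (measurable_pi_apply i)
        exact hmp.lintegral_comp hm
    _ = ENNReal.ofReal (∫ x : Fin 3 → ℝ, ∏ i, g i (x i)) := by
        rw [ofReal_integral_eq_lintegral_ofReal]
        · exact Integrable.fintype_prod hgi
        · refine .of_forall fun x => Finset.prod_nonneg fun i _ => ?_
          simp only [hg]; split_ifs <;> positivity
    _ = ENNReal.ofReal (√(π * 18) * π / l) := by
        rw [integral_fintype_prod_volume_eq_prod, Fin.prod_univ_three]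
        have h20 : (2 : Fin 3) ≠ 0 := by decide
        simp only [hg, if_true, one_ne_zero, h20, if_false]
        rw [integral_gaussian, integral_gaussian, mul_assoc,
          Real.mul_self_sqrt (by positivity)]
        congr 1
        rw [mul_div_assoc]
        norm_num

/-! ### The Japanese bracket and the kinetic singularity -/

lemma one_le_jap (v : E3) : 1 ≤ jap v := by
  unfold jap
  exact Real.one_le_sqrt.2 (by nlinarith [sq_nonneg ‖v‖])

lemma jap_sq (v : E3) : jap v ^ 2 = 1 + ‖v‖ ^ 2 := by
  unfold jap
  exact Real.sq_sqrt (by positivity)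

lemma norm_le_jap (v : E3) : ‖v‖ ≤ jap v :=
  Real.le_sqrt_of_sq_le (by linarith)

lemma one_add_sq_rpow (v : E3) (b : ℝ) : (1 + ‖v‖ ^ 2) ^ (b / 2) = jap v ^ b := by
  have := one_le_jap v
  rw [← jap_sq, ← Real.rpow_natCast, ← Real.rpow_mul (by linarith)]
  congr 1
  push_cast
  ring

lemma integrable_ball_rpow (γ : ℝ) (h : -3 < γ) :
    Integrable (Set.indicator (Metric.ball (0 : E3) 1) fun u => ‖u‖ ^ γ) := by
  rw [integrable_indicator_iff measurableSet_ball,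
    integrableOn_fun_norm_addHaar (volume : Measure E3) (f := fun t : ℝ => t ^ γ)]
  have h1 : IntegrableOn (fun t : ℝ => t ^ (γ + 2)) (Set.Ioo 0 1) := by
    rw [← intervalIntegrable_iff_integrableOn_Ioo_of_le zero_le_one]
    exact intervalIntegral.intervalIntegrable_rpow' (by linarith)
  refine h1.congr_fun (fun t ht => ?_) measurableSet_Ioo
  have ht0 : 0 < t := ht.1
  simp only [finrank_euclideanSpace, Fintype.card_fin, smul_eq_mul]
  rw [Real.rpow_add ht0, mul_comm]
  norm_num

/-- The singularity of `‖v - w‖ ^ γ` is integrable near `w = v`, and away from it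
`‖v - w‖ ^ γ ≤ ‖v - w‖ ≤ 2 ⟨v⟩ ⟨w⟩`, the growth in `w` being absorbed by the exponential. -/
lemma singular_weight (γ b c : ℝ) (hγ1 : -3 < γ) (hγ2 : γ ≤ 1) (hb : 0 < b) (hc : 0 < c) :
    ∃ C : ℝ, 0 < C ∧ ∀ v : E3,
      ∫⁻ w : E3, ENNReal.ofReal (‖v - w‖ ^ γ * Real.exp (-c * jap w ^ b)) ≤
        ENNReal.ofReal (C * jap v) := by
  obtain ⟨C1, hC1, hC⟩ := rpow_le_exp c b 5 hc hb
  set h : E3 → ℝ := Set.indicator (Metric.ball (0 : E3) 1) fun u => ‖u‖ ^ γ with hh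
  have h0 : ∀ u, 0 ≤ h u := fun u => Set.indicator_nonneg (fun _ _ => by positivity) _
  have hi : Integrable h := integrable_ball_rpow γ hγ1
  set g : E3 → ℝ := fun w => (1 + ‖w‖ ^ 2) ^ (-4 / 2 : ℝ) with hg
  have gi : Integrable g := integrable_rpow_neg_one_add_norm_sq (by simp; norm_num)
  have g0 : ∀ u, 0 ≤ g u := fun u => by positivity
  have Hn : 0 ≤ ∫ u, h u := integral_nonneg h0
  have Gn : 0 ≤ ∫ u, g u := integral_nonneg g0
  refine ⟨(∫ u, h u) + 2 * C1 * (∫ u, g u) + 1, by positivity, fun v => ?_⟩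
  have hJ := one_le_jap v
  have pt : ∀ w, ‖v - w‖ ^ γ * Real.exp (-c * jap w ^ b) ≤
      h (v - w) + 2 * jap v * C1 * g w := by
    intro w
    have hw := one_le_jap w
    have hE : Real.exp (-c * jap w ^ b) ≤ 1 := Real.exp_le_one_iff.2 (by
      have : 0 ≤ c * jap w ^ b := by positivity
      linarith)
    have hg0 : 0 ≤ 2 * jap v * C1 * g w := by have := g0 w; positivity
    by_cases hu : ‖v - w‖ < 1
    · have : h (v - w) = ‖v - w‖ ^ γ := by
        rw [hh, Set.indicator_of_mem]; simpa using hu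
      rw [this]
      have : ‖v - w‖ ^ γ * Real.exp (-c * jap w ^ b) ≤ ‖v - w‖ ^ γ * 1 := by gcongr
      linarith
    · push Not at hu
      have e1 : ‖v - w‖ ^ γ ≤ 2 * jap v * jap w := by
        calc ‖v - w‖ ^ γ ≤ ‖v - w‖ ^ (1 : ℝ) := Real.rpow_le_rpow_of_exponent_le hu hγ2
          _ = ‖v - w‖ := Real.rpow_one _
          _ ≤ ‖v‖ + ‖w‖ := norm_sub_le _ _
          _ ≤ jap v + jap w := add_le_add (norm_le_jap v) (norm_le_jap w)
          _ ≤ _ := by nlinarith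
      have e2 : jap w * Real.exp (-c * jap w ^ b) ≤ C1 * g w := by
        have hgw : g w = jap w ^ (-4 : ℝ) := one_add_sq_rpow w (-4)
        have e3 := hC _ hw
        have e4 : jap w ^ (5 : ℝ) = jap w * jap w ^ (4 : ℝ) := by
          rw [← Real.rpow_one_add' (by linarith) (by norm_num)]; norm_num
        rw [hgw, Real.rpow_neg (by linarith), neg_mul, Real.exp_neg, ← div_eq_mul_inv,
          ← div_eq_mul_inv, div_le_div_iff₀ (Real.exp_pos _) (by positivity), ← e4]
        exact e3
      calc ‖v - w‖ ^ γ * Real.exp (-c * jap w ^ b) ≤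
          2 * jap v * jap w * Real.exp (-c * jap w ^ b) := by gcongr
        _ = 2 * jap v * (jap w * Real.exp (-c * jap w ^ b)) := by ring
        _ ≤ 2 * jap v * (C1 * g w) := by gcongr
        _ ≤ _ := by have := h0 (v - w); linarith
  have hi' : Integrable fun w => h (v - w) := hi.comp_sub_left v
  calc ∫⁻ w : E3, ENNReal.ofReal (‖v - w‖ ^ γ * Real.exp (-c * jap w ^ b)) ≤
      ∫⁻ w, ENNReal.ofReal (h (v - w) + 2 * jap v * C1 * g w) :=
        lintegral_mono fun w => ENNReal.ofReal_le_ofReal (pt w)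
    _ = ENNReal.ofReal (∫ w, (h (v - w) + 2 * jap v * C1 * g w)) := by
        refine (ofReal_integral_eq_lintegral_ofReal (hi'.add (gi.const_mul _)) ?_).symm
        refine .of_forall fun w => ?_
        have := h0 (v - w)
        have := g0 w
        simp only [Pi.zero_apply, Pi.add_apply]
        positivity
    _ ≤ _ := by
        apply ENNReal.ofReal_le_ofReal
        rw [integral_add hi' (gi.const_mul _), integral_const_mul,
          integral_sub_left_eq_self h volume v]
        nlinarith

/-! ### The two regions -/

lemma inner_rpow (γ J d : ℝ) (hγ1 : -3 < γ) (hγ2 : γ ≤ 1) (hJ : 1 ≤ J) (h1 : J / 4 ≤ d)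
    (h2 : d ≤ 2 * J) : d ^ γ ≤ 64 * J ^ γ := by
  have hJ0 : 0 < J := by linarith
  have hJγ : 0 < J ^ γ := by positivity
  rcases le_total 0 γ with h | h
  · calc d ^ γ ≤ (2 * J) ^ γ := Real.rpow_le_rpow (by linarith) h2 h
      _ = 2 ^ γ * J ^ γ := Real.mul_rpow (by norm_num) hJ0.le
      _ ≤ 2 ^ (1 : ℝ) * J ^ γ := by gcongr; norm_num
      _ ≤ _ := by rw [Real.rpow_one]; nlinarith
  · calc d ^ γ ≤ (J / 4) ^ γ := Real.rpow_le_rpow_of_nonpos (by linarith) h1 h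
      _ = J ^ γ * 4 ^ (-γ) := by
          rw [Real.div_rpow hJ0.le (by norm_num), Real.rpow_neg (by norm_num), div_eq_mul_inv]
      _ ≤ J ^ γ * 4 ^ (3 : ℝ) := by gcongr <;> linarith
      _ = _ := by norm_num; ring

lemma inner_exponent (b R y : ℝ) (hb1 : 0 < b) (hb2 : b < 2) (hy : 0 ≤ y) (hyR : y ≤ R ^ 2) :
    1 / 2 * (1 + R ^ 2) ^ (b / 2 - 1) ≤ (1 + R ^ 2 + y) ^ (b / 2 - 1) := by
  have h1 : (2 : ℝ)⁻¹ ≤ 2 ^ (b / 2 - 1) := by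
    rw [← Real.rpow_neg_one]
    exact Real.rpow_le_rpow_of_exponent_le (by norm_num) (by linarith)
  calc 1 / 2 * (1 + R ^ 2) ^ (b / 2 - 1) ≤ 2 ^ (b / 2 - 1) * (1 + R ^ 2) ^ (b / 2 - 1) := by
        gcongr; linarith
    _ = (2 * (1 + R ^ 2)) ^ (b / 2 - 1) := (Real.mul_rpow (by norm_num) (by positivity)).symm
    _ ≤ _ := Real.rpow_le_rpow_of_nonpos (by positivity) (by linarith) (by linarith)

/-- For large `y` both `(1 + y) ^ β` and `X ^ β` are controlled by `y (X + y) ^ (β - 1)`. -/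
lemma outer_exponent (β X y : ℝ) (hb1 : 0 < β) (hb2 : β < 1) (hX : 1 ≤ X) (hy : 0 ≤ y)
    (hXy : X ≤ 4 * (1 + y)) :
    (1 + y) ^ β / 10 + X ^ β / 40 - 1 / 5 ≤ y * (X + y) ^ (β - 1) := by
  have hY : 0 < 1 + y := by linarith
  have h1 : (5 : ℝ)⁻¹ ≤ 5 ^ (β - 1) := by
    rw [← Real.rpow_neg_one]
    exact Real.rpow_le_rpow_of_exponent_le (by norm_num) (by linarith)
  have h2 : (5 : ℝ)⁻¹ * (1 + y) ^ (β - 1) ≤ (X + y) ^ (β - 1) := by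
    calc (5 : ℝ)⁻¹ * (1 + y) ^ (β - 1) ≤ 5 ^ (β - 1) * (1 + y) ^ (β - 1) := by gcongr
      _ = (5 * (1 + y)) ^ (β - 1) := (Real.mul_rpow (by norm_num) hY.le).symm
      _ ≤ _ := Real.rpow_le_rpow_of_nonpos (by positivity) (by linarith) (by linarith)
  have h3 : (1 + y) ^ β = (1 + y) ^ (β - 1) * (1 + y) := by
    rw [← Real.rpow_add_one hY.ne']; ring_nf
  have h4 : (1 + y) ^ (β - 1) ≤ 1 :=
    Real.rpow_le_one_of_one_le_of_nonpos (by linarith) (by linarith)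
  have h5 : X ^ β ≤ 4 * (1 + y) ^ β := by
    calc X ^ β ≤ (4 * (1 + y)) ^ β := Real.rpow_le_rpow (by linarith) hXy hb1.le
      _ = 4 ^ β * (1 + y) ^ β := Real.mul_rpow (by norm_num) hY.le
      _ ≤ 4 ^ (1 : ℝ) * (1 + y) ^ β := by gcongr; norm_num
      _ = _ := by rw [Real.rpow_one]
  have h6 : y * ((5 : ℝ)⁻¹ * (1 + y) ^ (β - 1)) ≤ y * (X + y) ^ (β - 1) := by gcongr
  nlinarith

lemma weight_bound (a b : ℝ) (ha : 0 < a) (hb1 : 0 < b) (hb2 : b < 2) :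
    ∃ c K : ℝ, 0 < c ∧ 0 ≤ K ∧ ∀ (v w : E3) (σ : S2),
      Real.exp (a * jap v ^ b - a * jap (vP v w σ) ^ b) * Real.exp (-‖vsP v w σ‖ ^ 2 / 2) ≤
        Real.exp (K - c * (‖w‖ ^ 2 * (1 + ‖v‖ ^ 2 + ‖w‖ ^ 2) ^ (b / 2 - 1)) -
          ‖vsP v w σ‖ ^ 2 / 4) := by
  obtain ⟨c, K, hc, hK, h⟩ := exponent_bound a (b / 2) ha (by linarith) (by linarith)
  refine ⟨c, K, hc, hK, fun v w σ => ?_⟩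
  rw [← Real.exp_add]
  apply Real.exp_le_exp.2
  have hE := energy v w σ
  have := h (1 + ‖v‖ ^ 2) (‖w‖ ^ 2) (‖vsP v w σ‖ ^ 2) (1 + ‖vP v w σ‖ ^ 2)
    (by nlinarith [sq_nonneg ‖v‖]) (by positivity) (by positivity)
    (by nlinarith [sq_nonneg ‖vP v w σ‖]) (by linarith)
  rw [one_add_sq_rpow, one_add_sq_rpow] at this
  linarith

/-- The contribution of the velocities `w` with `‖w‖ ≤ ‖v‖ / 2`, after integration over the
sphere: the sphere has radius comparable with `⟨v⟩`, which gains the factor `⟨v⟩⁻²`. -/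
lemma inner_region (γ b c K : ℝ) (hγ1 : -3 < γ) (hγ2 : γ ≤ 1) (hb1 : 0 < b) (hb2 : b < 2)
    (hc : 0 < c) :
    ∃ C : ℝ, 0 < C ∧ ∀ v w : E3, 1 ≤ ‖v‖ → ‖w‖ ≤ ‖v‖ / 2 →
      ∫⁻ σ : S2, ENNReal.ofReal (‖v - w‖ ^ γ *
        Real.exp (K - c * (‖w‖ ^ 2 * (1 + ‖v‖ ^ 2 + ‖w‖ ^ 2) ^ (b / 2 - 1)) -
          ‖vsP v w σ‖ ^ 2 / 4)) ≤
      ENNReal.ofReal (C * jap v ^ (γ - 2) *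
        Real.exp (-(c / 2 * jap v ^ (b - 2) * ‖w‖ ^ 2) -
          ⟪(‖v‖⁻¹ : ℝ) • v, w⟫ ^ 2 / 18)) := by
  obtain ⟨C, hC, hS⟩ := sphere_gauss
  refine ⟨64 * Real.exp K * (64 * C), by positivity, fun v w hv hw => ?_⟩
  have hv0 : v ≠ 0 := norm_pos_iff.1 (by linarith)
  set J := jap v with hJ
  have hJ1 : 1 ≤ J := one_le_jap v
  have hJ0 : 0 < J := by linarith
  have hJR : J ≤ 2 * ‖v‖ := by
    have := jap_sq v
    nlinarith
  have hRJ : ‖v‖ ≤ J := norm_le_jap v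
  have hd1 : J / 4 ≤ ‖v - w‖ := by
    have := norm_sub_norm_le v w
    linarith
  have hd2 : ‖v - w‖ ≤ 2 * J := by
    have := norm_sub_le v w
    linarith
  have hdγ := inner_rpow γ J _ hγ1 hγ2 hJ1 hd1 hd2
  have hexp : 1 / 2 * J ^ (b - 2) ≤ (1 + ‖v‖ ^ 2 + ‖w‖ ^ 2) ^ (b / 2 - 1) := by
    have h1 := inner_exponent b ‖v‖ (‖w‖ ^ 2) hb1 hb2 (by positivity)
      (by nlinarith [norm_nonneg w])
    have h2 := one_add_sq_rpow v (b - 2)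
    rw [show (b - 2) / 2 = b / 2 - 1 by ring] at h2
    rwa [h2] at h1
  set A : ℝ := Real.exp (-(c / 2 * J ^ (b - 2) * ‖w‖ ^ 2) - ⟪(‖v‖⁻¹ : ℝ) • v, w⟫ ^ 2 / 18) with hA
  set p : E3 := (2⁻¹ : ℝ) • (v + w) with hp
  set ρ : ℝ := ‖v - w‖ / 2 with hρ
  have hρJ : J / 8 ≤ ρ := by linarith
  have hρ0 : 0 < ρ := by linarith
  have pt : ∀ σ : S2, ‖v - w‖ ^ γ *
        Real.exp (K - c * (‖w‖ ^ 2 * (1 + ‖v‖ ^ 2 + ‖w‖ ^ 2) ^ (b / 2 - 1)) -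
          ‖vsP v w σ‖ ^ 2 / 4) ≤
      64 * J ^ γ * Real.exp K * A * Real.exp (-‖p - ρ • (σ : E3)‖ ^ 2 / 8) := by
    intro σ
    have h1 := vsP_lower v w σ hv0 hw
    have h2 : c * (‖w‖ ^ 2 * (1 / 2 * J ^ (b - 2))) ≤
        c * (‖w‖ ^ 2 * (1 + ‖v‖ ^ 2 + ‖w‖ ^ 2) ^ (b / 2 - 1)) := by gcongr
    have h3 : 64 * J ^ γ * Real.exp K * A * Real.exp (-‖p - ρ • (σ : E3)‖ ^ 2 / 8) =
        64 * J ^ γ * Real.exp (K + (-(c / 2 * J ^ (b - 2) * ‖w‖ ^ 2) -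
          ⟪(‖v‖⁻¹ : ℝ) • v, w⟫ ^ 2 / 18) + -‖vsP v w σ‖ ^ 2 / 8) := by
      rw [Real.exp_add, Real.exp_add, hA]
      simp only [vsP, hp, hρ]
      ring
    rw [h3]
    gcongr
    linarith
  calc _ ≤ ∫⁻ σ : S2, ENNReal.ofReal (64 * J ^ γ * Real.exp K * A) *
        ENNReal.ofReal (Real.exp (-‖p - ρ • (σ : E3)‖ ^ 2 / 8)) := by
        refine lintegral_mono fun σ => ?_
        rw [← ENNReal.ofReal_mul (by positivity)]
        exact ENNReal.ofReal_le_ofReal (pt σ)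
    _ ≤ ENNReal.ofReal (64 * J ^ γ * Real.exp K * A) * ENNReal.ofReal (C / ρ ^ 2) := by
        rw [lintegral_const_mul' _ _ ENNReal.ofReal_ne_top]
        gcongr
        exact hS p ρ hρ0
    _ ≤ _ := by
        rw [← ENNReal.ofReal_mul (by positivity)]
        apply ENNReal.ofReal_le_ofReal
        have h4 : C / ρ ^ 2 ≤ 64 * C / J ^ 2 := by
          rw [div_le_div_iff₀ (by positivity) (by positivity)]
          have : J ^ 2 ≤ 64 * ρ ^ 2 := by nlinarith
          nlinarith
        have h5 : J ^ (γ - 2) = J ^ γ / J ^ 2 := by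
          rw [Real.rpow_sub hJ0]; norm_num
        calc _ ≤ 64 * J ^ γ * Real.exp K * A * (64 * C / J ^ 2) := by gcongr
          _ = _ := by rw [h5]; ring

/-- The remaining velocities: there `⟨v⟩ ≤ 2⟨w⟩`, so the weight is bounded by
stretched exponentials in both `v` and `w`. -/
lemma outer_region (γ b c K : ℝ) (hb1 : 0 < b) (hb2 : b < 2) (hc : 0 < c) :
    ∃ C : ℝ, 0 < C ∧ ∀ v w : E3, ¬ (1 ≤ ‖v‖ ∧ ‖w‖ ≤ ‖v‖ / 2) →
      ∫⁻ σ : S2, ENNReal.ofReal (‖v - w‖ ^ γ *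
        Real.exp (K - c * (‖w‖ ^ 2 * (1 + ‖v‖ ^ 2 + ‖w‖ ^ 2) ^ (b / 2 - 1)) -
          ‖vsP v w σ‖ ^ 2 / 4)) ≤
      ENNReal.ofReal (C * Real.exp (-(c / 40) * jap v ^ b)) *
        ENNReal.ofReal (‖v - w‖ ^ γ * Real.exp (-(c / 10) * jap w ^ b)) := by
  set S : ℝ := (volume : Measure E3).toSphere.real Set.univ with hS
  have hSe : (volume : Measure S2) Set.univ = ENNReal.ofReal S := by
    rw [hS, ofReal_measureReal]
    rfl
  have hS0 : 0 ≤ S := measureReal_nonneg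
  refine ⟨(S + 1) * Real.exp (K + c / 5), by positivity, fun v w hvw => ?_⟩
  have hX : 1 + ‖v‖ ^ 2 ≤ 4 * (1 + ‖w‖ ^ 2) := by
    by_contra! hcon
    apply hvw
    constructor <;> nlinarith [norm_nonneg v, norm_nonneg w]
  have h1 := outer_exponent (b / 2) (1 + ‖v‖ ^ 2) (‖w‖ ^ 2) (by linarith) (by linarith)
    (by nlinarith [sq_nonneg ‖v‖]) (by positivity) hX
  rw [one_add_sq_rpow, one_add_sq_rpow] at h1
  have h2 := mul_le_mul_of_nonneg_left h1 hc.le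
  calc _ ≤ ∫⁻ σ : S2, ENNReal.ofReal (‖v - w‖ ^ γ * Real.exp ((K + c / 5) +
          -(c / 40) * jap v ^ b + -(c / 10) * jap w ^ b)) := by
        refine lintegral_mono fun σ => ENNReal.ofReal_le_ofReal ?_
        gcongr
        have := sq_nonneg ‖vsP v w σ‖
        linarith
    _ = ENNReal.ofReal (‖v - w‖ ^ γ * Real.exp ((K + c / 5) +
          -(c / 40) * jap v ^ b + -(c / 10) * jap w ^ b)) * ENNReal.ofReal S := by
        rw [lintegral_const, hSe]
    _ ≤ _ := by
        rw [← ENNReal.ofReal_mul (by positivity), ← ENNReal.ofReal_mul (by positivity)]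
        apply ENNReal.ofReal_le_ofReal
        rw [Real.exp_add, Real.exp_add]
        set E1 := Real.exp (K + c / 5)
        set E2 := Real.exp (-(c / 40) * jap v ^ b)
        set E3' := Real.exp (-(c / 10) * jap w ^ b)
        calc ‖v - w‖ ^ γ * (E1 * E2 * E3') * S = S * (E1 * E2 * E3' * ‖v - w‖ ^ γ) := by ring
          _ ≤ (S + 1) * (E1 * E2 * E3' * ‖v - w‖ ^ γ) := by gcongr; linarith
          _ = _ := by ring

/-! ### Conclusion -/

/-- exponential-weight estimate for the linearized kernel. -/
theorem stmt7 (γ a b : ℝ) (hγ1 : -3 < γ) (hγ2 : γ ≤ 1) (ha : 0 < a)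
    (hb1 : 0 < b) (hb2 : b < 2) :
    ∃ C : ℝ, 0 < C ∧ ∀ v : E3,
      (∫⁻ w : E3, ∫⁻ σ : S2, ENNReal.ofReal
          (‖v - w‖ ^ γ * Real.exp (a * jap v ^ b - a * jap (vP v w σ) ^ b) *
            Real.exp (-‖vsP v w σ‖ ^ 2 / 2))) ≤
        ENNReal.ofReal (C * jap v ^ (γ - b * (γ + 3) / 4)) := by
  obtain ⟨c, K, hc, hK, hW⟩ := weight_bound a b ha hb1 hb2
  obtain ⟨C1, hC1, hin⟩ := inner_region γ b c K hγ1 hγ2 hb1 hb2 hc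
  obtain ⟨C2, hC2, hout⟩ := outer_region γ b c K hb1 hb2 hc
  obtain ⟨C3, hC3, hG⟩ := aniso_gauss
  obtain ⟨C4, hC4, hsing⟩ := singular_weight γ b (c / 10) hγ1 hγ2 hb1 (by positivity)
  obtain ⟨C5, hC5, hdec⟩ := rpow_le_exp (c / 40) b (1 - γ + b) (by positivity) hb1
  refine ⟨C1 * C3 * 2 / c + C2 * C4 * C5, by positivity, fun v => ?_⟩
  set J := jap v with hJ
  have hJ1 : 1 ≤ J := one_le_jap v
  have hJ0 : 0 < J := by linarith
  -- `e` is the direction of `v`; any unit vector serves at `v = 0`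
  obtain ⟨e, he1, hev⟩ : ∃ e : E3, ‖e‖ = 1 ∧ (v ≠ 0 → e = (‖v‖⁻¹ : ℝ) • v) := by
    by_cases h0 : v = 0
    · exact ⟨e1, by simp [e1], fun h => absurd h0 h⟩
    · exact ⟨(‖v‖⁻¹ : ℝ) • v, norm_smul_inv_norm (𝕜 := ℝ) h0, fun _ => rfl⟩
  set l : ℝ := c / 2 * J ^ (b - 2) with hl
  have hl0 : 0 < l := by positivity
  set F : E3 → ℝ≥0∞ := fun w => ENNReal.ofReal (C1 * J ^ (γ - 2)) *
    ENNReal.ofReal (Real.exp (-(l * ‖w‖ ^ 2) - ⟪e, w⟫ ^ 2 / 18)) with hF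
  set H : E3 → ℝ≥0∞ := fun w => ENNReal.ofReal (C2 * Real.exp (-(c / 40) * J ^ b)) *
    ENNReal.ofReal (‖v - w‖ ^ γ * Real.exp (-(c / 10) * jap w ^ b)) with hH
  have hFm : Measurable F := by fun_prop
  have pt : ∀ w : E3, ∫⁻ σ : S2, ENNReal.ofReal
          (‖v - w‖ ^ γ * Real.exp (a * J ^ b - a * jap (vP v w σ) ^ b) *
            Real.exp (-‖vsP v w σ‖ ^ 2 / 2)) ≤ F w + H w := by
    intro w
    have h1 : ∫⁻ σ : S2, ENNReal.ofReal
          (‖v - w‖ ^ γ * Real.exp (a * J ^ b - a * jap (vP v w σ) ^ b) *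
            Real.exp (-‖vsP v w σ‖ ^ 2 / 2)) ≤ ∫⁻ σ : S2, ENNReal.ofReal (‖v - w‖ ^ γ *
        Real.exp (K - c * (‖w‖ ^ 2 * (1 + ‖v‖ ^ 2 + ‖w‖ ^ 2) ^ (b / 2 - 1)) -
          ‖vsP v w σ‖ ^ 2 / 4)) := by
      refine lintegral_mono fun σ => ENNReal.ofReal_le_ofReal ?_
      rw [mul_assoc]
      gcongr
      exact hW v w σ
    by_cases hr : 1 ≤ ‖v‖ ∧ ‖w‖ ≤ ‖v‖ / 2
    · have hv0 : v ≠ 0 := norm_pos_iff.1 (by linarith [hr.1])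
      have h2 := h1.trans (hin v w hr.1 hr.2)
      rw [ENNReal.ofReal_mul (by positivity), ← hev hv0] at h2
      exact h2.trans le_self_add
    · exact (h1.trans (hout v w hr)).trans le_add_self
  have hFi : ∫⁻ w, F w ≤ ENNReal.ofReal (C1 * C3 * 2 / c * J ^ (γ - b)) := by
    rw [lintegral_const_mul' _ _ ENNReal.ofReal_ne_top]
    refine (mul_le_mul_right (hG e l he1 hl0) _).trans (le_of_eq ?_)
    rw [← ENNReal.ofReal_mul (by positivity)]
    congr 1
    have : J ^ (γ - 2) = J ^ (γ - b) * J ^ (b - 2) := by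
      rw [← Real.rpow_add hJ0]; ring_nf
    rw [this, hl]
    field_simp
  have hHi : ∫⁻ w, H w ≤ ENNReal.ofReal (C2 * C4 * C5 * J ^ (γ - b)) := by
    rw [lintegral_const_mul' _ _ ENNReal.ofReal_ne_top]
    refine (mul_le_mul_right (hsing v) _).trans ?_
    rw [← ENNReal.ofReal_mul (by positivity)]
    apply ENNReal.ofReal_le_ofReal
    have h1 := hdec J hJ1
    have h2 : J = J ^ (γ - b) * J ^ (1 - γ + b) := by
      rw [← Real.rpow_add hJ0]; ring_nf; rw [Real.rpow_one]
    have h3 : Real.exp (-(c / 40) * J ^ b) * Real.exp (c / 40 * J ^ b) = 1 := by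
      rw [← Real.exp_add]; simp
    have h4 : J * Real.exp (-(c / 40) * J ^ b) ≤ C5 * J ^ (γ - b) := by
      calc J * Real.exp (-(c / 40) * J ^ b) =
          J ^ (γ - b) * J ^ (1 - γ + b) * Real.exp (-(c / 40) * J ^ b) := by rw [← h2]
        _ ≤ J ^ (γ - b) * (C5 * Real.exp (c / 40 * J ^ b)) * Real.exp (-(c / 40) * J ^ b) := by
          gcongr
        _ = C5 * J ^ (γ - b) * (Real.exp (-(c / 40) * J ^ b) * Real.exp (c / 40 * J ^ b)) := by
          ring
        _ = _ := by rw [h3, mul_one]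
    calc C2 * Real.exp (-(c / 40) * J ^ b) * (C4 * jap v) =
        C2 * C4 * (J * Real.exp (-(c / 40) * J ^ b)) := by rw [← hJ]; ring
      _ ≤ C2 * C4 * (C5 * J ^ (γ - b)) := by gcongr
      _ = _ := by ring
  calc _ ≤ ∫⁻ w, (F w + H w) := lintegral_mono pt
    _ = (∫⁻ w, F w) + ∫⁻ w, H w := lintegral_add_left hFm _
    _ ≤ _ := add_le_add hFi hHi
    _ ≤ _ := by
        rw [← ENNReal.ofReal_add (by positivity) (by positivity), ← add_mul]
        apply ENNReal.ofReal_le_ofReal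
        -- the exponent `γ - b` is at most the claimed one because `(γ + 3) / 4 ≤ 1`
        have : J ^ (γ - b) ≤ J ^ (γ - b * (γ + 3) / 4) :=
          Real.rpow_le_rpow_of_exponent_le hJ1 (by nlinarith)
        gcongr

end
end
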